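/- arXiv:1810.03757 — 2 statements merged into one kernel-verified Lean document; each statement's English description precedes it below -/
import Mathlib

section
/- Let f ∈ Hol(α) be a bounded α-Hölder potential which is normalized (L_f 1 = 1), let ν be the unique Borel probability measure on X with L_f^*ν = ν, and let ξ ∈ Hol(α) be a real-valued bounded α-Hölder function with ∫_X ξ dν = 0. Set S_n(ξ) = Σ_{k=0}^{n−1} ξ∘σ^k. Then the limit s² = lim_{n→∞} (1/n)·∫_X (S_n(ξ))² dν exists, and if s > 0 there exists C > 0 such that for every n ∈ ℕ: sup_{u ∈ ℝ} | ν({x ∈ X : S_n(ξ)(x) ≤ u·√n}) − Φ(u/s) | ≤ C·n^{−1/2}, where Φ denotes the cumulative distribution function of the standard normal distribution. -/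
open MeasureTheory Filter Topology BoundedContinuousFunction

noncomputable section

variable {E : Type*} [MetricSpace E]

/-- The metric on the sequence space `X = E^ℕ`:
`d_X(x,y) = ∑_{n=1}^∞ 2⁻ⁿ · min(d_E(x_n,y_n), 1)`. -/
def dX (x y : ℕ → E) : ℝ :=
  ∑' n : ℕ, ((1 : ℝ) / 2) ^ (n + 1) * min (dist (x n) (y n)) 1

/-- The left shift `σ(x₁,x₂,x₃,…) = (x₂,x₃,…)`. -/
def shift (x : ℕ → E) : ℕ → E := fun n => x (n + 1)

theorem continuous_shift : Continuous (shift (E := E)) :=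
  continuous_pi fun n => continuous_apply (n + 1)

/-- Prepending one symbol: `ax = (a, x₁, x₂, …)`. -/
def cons (a : E) (x : ℕ → E) : ℕ → E := fun n => Nat.casesOn n a x

/-- Prepending a finite word `a = (a₁,…,a_n)`. -/
def prepend {n : ℕ} (a : Fin n → E) (x : ℕ → E) : ℕ → E :=
  fun k => if h : k < n then a ⟨k, h⟩ else x (k - n)

/-- Birkhoff sums `f_n = ∑_{k=0}^{n-1} f ∘ σᵏ`. -/
def birkhoff (f : (ℕ → E) → ℝ) (n : ℕ) (x : ℕ → E) : ℝ :=
  ∑ k ∈ Finset.range n, f (shift^[k] x)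

/-- Boundedness of a real-valued function on `X`. -/
def Bdd (g : (ℕ → E) → ℝ) : Prop := ∃ M : ℝ, ∀ x, |g x| ≤ M

/-- `g` is `α`-Hölder with constant `C` (w.r.t. the metric `dX`). -/
def HolderConst (α C : ℝ) (g : (ℕ → E) → ℝ) : Prop :=
  ∀ x y, |g x - g y| ≤ C * dX x y ^ α

/-- `g ∈ Hol(α)`: bounded, continuous and `α`-Hölder. -/
def MemHol (α : ℝ) (g : (ℕ → E) → ℝ) : Prop :=
  Continuous g ∧ Bdd g ∧ ∃ C : ℝ, HolderConst α C g

/-- `g ∈ C_b(X,ℝ)`: bounded and continuous. -/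
def MemCb (g : (ℕ → E) → ℝ) : Prop := Continuous g ∧ Bdd g

/-- The Hölder seminorm `D_α(g) = sup_{x ≠ y} |g x - g y| / d_X(x,y)^α`. -/
def Dalpha (α : ℝ) (g : (ℕ → E) → ℝ) : ℝ :=
  sSup {r : ℝ | ∃ x y : ℕ → E, x ≠ y ∧ r = |g x - g y| / dX x y ^ α}

/-- The supremum norm `‖g‖_∞`. -/
def supNorm (g : (ℕ → E) → ℝ) : ℝ := ⨆ x : ℕ → E, |g x|

/-- The Hölder norm `‖g‖_α = ‖g‖_∞ + D_α(g)`. -/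
def alphaNorm (α : ℝ) (g : (ℕ → E) → ℝ) : ℝ := supNorm g + Dalpha α g

variable [MeasurableSpace E] [BorelSpace E]

/-- The Ruelle transfer operator `L_f φ(x) = ∫_E e^{f(ax)} φ(ax) dp(a)`. -/
def ruelle (p : Measure E) (f φ : (ℕ → E) → ℝ) : (ℕ → E) → ℝ :=
  fun x => ∫ a, Real.exp (f (cons a x)) * φ (cons a x) ∂p

/-- The normalized operators `P^m_n(φ) = L_f^m(φ · L_f^n 1) / L_f^{m+n} 1`. -/
def Pmn (p : Measure E) (f : (ℕ → E) → ℝ) (m n : ℕ) (φ : (ℕ → E) → ℝ) : (ℕ → E) → ℝ :=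
  fun x => (ruelle p f)^[m] (fun y => φ y * (ruelle p f)^[n] (fun _ => 1) y) x /
    (ruelle p f)^[m + n] (fun _ => 1) x

/-- The equivalent bounded metric `d̄(x,y) = min{1, 4 C_f d_X(x,y)^α}`. -/
def dbar (Cf α : ℝ) (x y : ℕ → E) : ℝ := min 1 (4 * Cf * dX x y ^ α)

/-- The Wasserstein distance associated to `d̄`, via Kantorovich duality. -/
def wass (Cf α : ℝ) (μ₁ μ₂ : Measure (ℕ → E)) : ℝ :=
  sSup {r : ℝ | ∃ g : (ℕ → E) → ℝ,
    (∀ x y, |g x - g y| ≤ dbar Cf α x y) ∧ r = (∫ x, g x ∂μ₁) - ∫ x, g x ∂μ₂}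

/-- The cumulative distribution function of the standard normal distribution. -/
def stdNormalCDF (u : ℝ) : ℝ :=
  (Real.sqrt (2 * Real.pi))⁻¹ * ∫ t in Set.Iic u, Real.exp (-t ^ 2 / 2)

/-! ### Esseen's smoothing inequality -/
section Esseen

/-- The (unnormalised) Fejér kernel. -/
def kf (y : ℝ) : ℝ := ∫ t in (0 : ℝ)..1, (1 - t) * Real.cos (t * y)

theorem kf_formula {y : ℝ} (hy : y ≠ 0) : kf y = (1 - Real.cos y) / y ^ 2 := by
  unfold kf
  have hd : ∀ t ∈ Set.uIcc (0 : ℝ) 1, HasDerivAt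
      (fun t : ℝ => (1 - t) * (Real.sin (t * y) / y) - Real.cos (t * y) / y ^ 2)
      ((1 - t) * Real.cos (t * y)) t := by
    intro t _
    have h1 : HasDerivAt (fun t : ℝ => t * y) y t := by
      simpa using (hasDerivAt_id t).mul_const y
    have h2 : HasDerivAt (fun t : ℝ => (1 - t)) (-1) t := by
      simpa using (hasDerivAt_id t).const_sub 1
    have h3 := (h2.mul (h1.sin.div_const y)).sub (h1.cos.div_const (y ^ 2))
    refine h3.congr_deriv ?_
    field_simp
    ring
  rw [intervalIntegral.integral_eq_sub_of_hasDerivAt hd]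
  · simp; ring
  · apply Continuous.intervalIntegrable; fun_prop

theorem kf_continuous : Continuous kf := by
  unfold kf
  apply intervalIntegral.continuous_parametric_intervalIntegral_of_continuous'
  fun_prop

theorem kf_zero : kf 0 = 1 / 2 := by
  unfold kf
  simp only [mul_zero, Real.cos_zero, mul_one]
  rw [intervalIntegral.integral_sub (by simp) (by simp)]
  simp
  norm_num

theorem kf_nonneg (y : ℝ) : 0 ≤ kf y := by
  by_cases hy : y = 0
  · rw [hy, kf_zero]; norm_num
  · rw [kf_formula hy]
    have := Real.cos_le_one y
    have : 0 ≤ 1 - Real.cos y := by linarith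
    positivity

theorem kf_le_one (y : ℝ) : kf y ≤ 1 := by
  have : ‖kf y‖ ≤ 1 * |(1 : ℝ) - 0| := by
    unfold kf
    apply intervalIntegral.norm_integral_le_of_norm_le_const
    intro t ht
    rw [Set.uIoc_of_le zero_le_one] at ht
    rw [norm_mul]
    have h1 : ‖1 - t‖ ≤ 1 := by
      rw [Real.norm_eq_abs, abs_le]; constructor <;> linarith [ht.1, ht.2]
    have h2 := Real.abs_cos_le_one (t * y)
    rw [← Real.norm_eq_abs] at h2
    exact mul_le_one₀ h1 (norm_nonneg _) h2
  rw [Real.norm_eq_abs] at this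
  have h := le_abs_self (kf y)
  simp at this
  linarith

theorem kf_le (y : ℝ) : kf y ≤ 4 * (1 + y ^ 2)⁻¹ := by
  rw [← div_eq_mul_inv, le_div_iff₀ (by positivity)]
  by_cases h : y ^ 2 ≤ 1
  · have := kf_le_one y
    have := kf_nonneg y
    nlinarith
  · push Not at h
    have hy : y ≠ 0 := by rintro rfl; norm_num at h
    rw [kf_formula hy, div_mul_eq_mul_div, div_le_iff₀ (by positivity)]
    have := Real.neg_one_le_cos y
    have := Real.cos_le_one y
    nlinarith

theorem kf_integrable : Integrable kf := by
  refine (integrable_inv_one_add_sq.const_mul 4).mono' kf_continuous.aestronglyMeasurable ?_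
  refine Filter.Eventually.of_forall fun y => ?_
  rw [Real.norm_eq_abs, abs_of_nonneg (kf_nonneg y)]
  exact kf_le y

theorem kf_pos : 0 < ∫ y, kf y := by
  rw [integral_pos_iff_support_of_nonneg kf_nonneg kf_integrable]
  apply IsOpen.measure_pos
  · exact kf_continuous.isOpen_support
  · exact ⟨0, by simp [kf_zero]⟩

theorem kf_interval (a b : ℝ) : ∫ v in a..b, kf v =
    ∫ t in (0 : ℝ)..1, (1 - t) * ((Real.sin (t * b) - Real.sin (t * a)) / t) := by
  unfold kf
  rw [intervalIntegral_intervalIntegral_swap]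
  · apply intervalIntegral.integral_congr_ae
    refine Filter.Eventually.of_forall fun t ht => ?_
    rw [Set.uIoc_of_le zero_le_one] at ht
    have ht0 : t ≠ 0 := ht.1.ne'
    rw [intervalIntegral.integral_const_mul, intervalIntegral.integral_comp_mul_left _ ht0,
      integral_cos]
    rw [smul_eq_mul, div_eq_inv_mul]
  · have : Continuous (Function.uncurry fun v t : ℝ => (1 - t) * Real.cos (t * v)) := by
      unfold Function.uncurry; fun_prop
    refine (this.continuousOn.integrableOn_compact ((isCompact_uIcc (a := a) (b := b)).prod (isCompact_uIcc (a := 0) (b := 1)))).mono_set ?_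
    exact Set.prod_mono Set.uIoc_subset_uIcc Set.uIoc_subset_uIcc

/-- Primitive of the kernel. -/
def Hk (z : ℝ) : ℝ := ∫ v in Set.Iic z, kf v

theorem Hk_sub (a b : ℝ) : Hk b - Hk a = ∫ v in a..b, kf v :=
  intervalIntegral.integral_Iic_sub_Iic kf_integrable.integrableOn kf_integrable.integrableOn

theorem Hk_nonneg (z : ℝ) : 0 ≤ Hk z := integral_nonneg kf_nonneg

theorem Hk_le (z : ℝ) : Hk z ≤ ∫ y, kf y :=
  setIntegral_le_integral kf_integrable (Filter.Eventually.of_forall kf_nonneg)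

theorem Hk_mono : Monotone Hk := by
  intro a b hab
  have := Hk_sub a b
  have h2 : 0 ≤ ∫ v in a..b, kf v := intervalIntegral.integral_nonneg hab fun v _ => kf_nonneg v
  linarith

theorem Hk_tendsto : Tendsto Hk atBot (𝓝 0) := by
  have h1 : Tendsto (fun z => 4 * (Real.arctan z + Real.pi / 2)) atBot (𝓝 0) := by
    have := (Real.tendsto_arctan_atBot.mono_right nhdsWithin_le_nhds)
    have := (this.add_const (Real.pi / 2)).const_mul 4
    simpa using this
  refine squeeze_zero Hk_nonneg (fun z => ?_) h1
  rw [← integral_Iic_inv_one_add_sq, ← integral_const_mul]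
  exact integral_mono kf_integrable.integrableOn
    (integrable_inv_one_add_sq.const_mul 4).integrableOn kf_le

theorem Hk_int (μ : Measure ℝ) [IsProbabilityMeasure μ] (T x : ℝ) :
    Integrable (fun y => Hk (T * (x - y))) μ := by
  refine Integrable.of_bound (C := ∫ y, kf y) ?_ ?_
  · exact (Hk_mono.measurable.comp (by fun_prop)).aestronglyMeasurable
  · refine Filter.Eventually.of_forall fun y => ?_
    rw [Real.norm_eq_abs, abs_of_nonneg (Hk_nonneg _)]
    exact Hk_le _

theorem sin_int (μ : Measure ℝ) [IsProbabilityMeasure μ] (s x : ℝ) :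
    ∫ y, Real.sin (s * (x - y)) ∂μ = (Complex.exp (s * x * Complex.I) * charFun μ (-s)).im := by
  rw [charFun_apply_real, ← integral_const_mul]
  have hi : Integrable (fun y : ℝ => Complex.exp (s * x * Complex.I) *
      Complex.exp (((-s : ℝ) : ℂ) * y * Complex.I)) μ := by
    refine Integrable.of_bound (C := 1) (by fun_prop) (Filter.Eventually.of_forall fun y => ?_)
    rw [← Complex.exp_add]
    have : (s * x * Complex.I + ((-s : ℝ) : ℂ) * y * Complex.I) = ((s * (x - y) : ℝ) : ℂ) * Complex.I := by
      push_cast; ring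
    rw [this, Complex.norm_exp_ofReal_mul_I]
  have h := integral_im hi
  rw [← RCLike.im_eq_complex_im, ← h]
  congr 1
  ext y
  rw [← Complex.exp_add]
  have : (s * x * Complex.I + ((-s : ℝ) : ℂ) * y * Complex.I) = ((s * (x - y) : ℝ) : ℂ) * Complex.I := by
    push_cast; ring
  rw [this]
  simp only [RCLike.im_eq_complex_im]
  rw [Complex.exp_ofReal_mul_I_im]

theorem Fs_sub (μ : Measure ℝ) [IsProbabilityMeasure μ] {T x' x : ℝ} (hT : 0 < T) (hx : x' ≤ x) :
    ∫ y, Hk (T * (x - y)) ∂μ - ∫ y, Hk (T * (x' - y)) ∂μ =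
    ∫ t in (0 : ℝ)..1, (1 - t) * (((Complex.exp (((t * T : ℝ) : ℂ) * x * Complex.I) -
      Complex.exp (((t * T : ℝ) : ℂ) * x' * Complex.I)) * charFun μ (-(t * T))).im / t) := by
  rw [← integral_sub (Hk_int μ T x) (Hk_int μ T x')]
  simp_rw [Hk_sub, kf_interval]
  rw [← intervalIntegral_integral_swap]
  · apply intervalIntegral.integral_congr
    intro t _
    simp only
    rw [integral_const_mul, integral_div]
    congr 2
    have hi : ∀ x, Integrable (fun y : ℝ => Real.sin (t * (T * (x - y)))) μ := fun x => by
      refine Integrable.of_bound (C := 1) (by fun_prop) (Filter.Eventually.of_forall fun y => ?_)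
      exact Real.abs_sin_le_one _
    rw [integral_sub (hi x) (hi x'), sub_mul, Complex.sub_im, ← sin_int, ← sin_int]
    simp_rw [mul_assoc]
  · rw [Set.uIoc_of_le zero_le_one]
    have hm : Measurable (Function.uncurry fun (t y : ℝ) =>
        (1 - t) * ((Real.sin (t * (T * (x - y))) - Real.sin (t * (T * (x' - y)))) / t)) := by
      unfold Function.uncurry; fun_prop
    refine Integrable.of_bound (C := T * (x - x')) hm.aestronglyMeasurable ?_
    have : ((volume : Measure ℝ).restrict (Set.Ioc 0 1)).prod μ =
        ((volume : Measure ℝ).prod μ).restrict (Set.Ioc 0 1 ×ˢ Set.univ) := by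
      rw [← Measure.prod_restrict, Measure.restrict_univ]
    rw [this, ae_restrict_iff' (by measurability)]
    refine Filter.Eventually.of_forall ?_
    rintro ⟨t, y⟩ ⟨ht, -⟩
    simp only [Function.uncurry]
    simp only [Set.mem_Ioc] at ht
    have l := Real.lipschitzWith_sin.dist_le_mul (t * (T * (x - y))) (t * (T * (x' - y)))
    rw [Real.dist_eq, Real.dist_eq] at l
    have e : t * (T * (x - y)) - t * (T * (x' - y)) = t * (T * (x - x')) := by ring
    rw [e, abs_of_nonneg (mul_nonneg ht.1.le (mul_nonneg hT.le (by linarith)))] at l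
    simp only [NNReal.coe_one, one_mul] at l
    rw [norm_mul, norm_div, Real.norm_eq_abs, Real.norm_eq_abs, Real.norm_eq_abs, abs_of_pos ht.1,
      abs_of_nonneg (by linarith : 0 ≤ 1 - t)]
    have : |Real.sin (t * (T * (x - y))) - Real.sin (t * (T * (x' - y)))| / t ≤ T * (x - x') := by
      rw [div_le_iff₀ ht.1]; linarith
    have h2 : 0 ≤ |Real.sin (t * (T * (x - y))) - Real.sin (t * (T * (x' - y)))| / t := by
      have := ht.1; positivity
    nlinarith [ht.1]

theorem Fs_tendsto (μ : Measure ℝ) [IsProbabilityMeasure μ] {T : ℝ} (hT : 0 < T) :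
    Tendsto (fun x => ∫ y, Hk (T * (x - y)) ∂μ) atBot (𝓝 0) := by
  have h : Tendsto (fun x => ∫ y, Hk (T * (x - y)) ∂μ) atBot (𝓝 (∫ y, (0 : ℝ) ∂μ)) := by
    refine tendsto_integral_filter_of_dominated_convergence (fun _ => ∫ y, kf y)
      (Filter.Eventually.of_forall fun x => (Hk_int μ T x).aestronglyMeasurable)
      (Filter.Eventually.of_forall fun x => Filter.Eventually.of_forall fun y => ?_)
      (integrable_const _) (Filter.Eventually.of_forall fun y => ?_)
    · rw [Real.norm_eq_abs, abs_of_nonneg (Hk_nonneg _)]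
      exact Hk_le _
    · refine Hk_tendsto.comp ?_
      exact (tendsto_id.atBot_add tendsto_const_nhds (C := -y)).const_mul_atBot hT
  simpa using h

theorem smooth_bound (μ γ : Measure ℝ) [IsProbabilityMeasure μ] [IsProbabilityMeasure γ]
    {T : ℝ} (hT : 0 < T) (h : ℝ → ℝ) (hc : Continuous h)
    (hb : ∀ t, 0 < t → t ≤ T → ‖charFun μ t - charFun γ t‖ ≤ t * h t) (x : ℝ) :
    |∫ y, Hk (T * (x - y)) ∂μ - ∫ y, Hk (T * (x - y)) ∂γ| ≤ 2 * ∫ t in (0 : ℝ)..T, h t := by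
  set Q : ℝ → ℝ := fun x => ∫ y, Hk (T * (x - y)) ∂μ - ∫ y, Hk (T * (x - y)) ∂γ with hQ
  have hlim : Tendsto (fun x' => |Q x - Q x'|) atBot (𝓝 |Q x - 0|) := by
    have : Tendsto Q atBot (𝓝 (0 - 0)) := (Fs_tendsto μ hT).sub (Fs_tendsto γ hT)
    rw [sub_zero] at this
    exact (this.const_sub (Q x)).abs
  rw [sub_zero] at hlim
  refine le_of_tendsto hlim ?_
  filter_upwards [Filter.eventually_le_atBot x] with x' hx'
  have e1 : Q x - Q x' = (∫ y, Hk (T * (x - y)) ∂μ - ∫ y, Hk (T * (x' - y)) ∂μ) -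
      (∫ y, Hk (T * (x - y)) ∂γ - ∫ y, Hk (T * (x' - y)) ∂γ) := by simp only [hQ]; ring
  have hInt0 : ∀ (μ : Measure ℝ) [IsProbabilityMeasure μ], IntervalIntegrable (fun t : ℝ =>
      (1 - t) * (((Complex.exp (((t * T : ℝ) : ℂ) * x * Complex.I) -
      Complex.exp (((t * T : ℝ) : ℂ) * x' * Complex.I)) * charFun μ (-(t * T))).im / t))
      volume 0 1 := by
    intro μ _
    rw [intervalIntegrable_iff_integrableOn_Ioc_of_le zero_le_one]
    have hm : Measurable (fun t : ℝ =>
      (1 - t) * (((Complex.exp (((t * T : ℝ) : ℂ) * x * Complex.I) -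
      Complex.exp (((t * T : ℝ) : ℂ) * x' * Complex.I)) * charFun μ (-(t * T))).im / t)) := by
      have : Measurable fun t : ℝ => charFun μ (-(t * T)) :=
        measurable_charFun.comp (by fun_prop)
      have h2 : Measurable fun t : ℝ => ((Complex.exp (((t * T : ℝ) : ℂ) * x * Complex.I) -
        Complex.exp (((t * T : ℝ) : ℂ) * x' * Complex.I)) * charFun μ (-(t * T))).im :=
        Complex.measurable_im.comp (Measurable.mul (by fun_prop) this)
      fun_prop
    refine Integrable.of_bound (C := T * (x - x')) hm.aestronglyMeasurable ?_
    rw [ae_restrict_iff' measurableSet_Ioc]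
    refine Filter.Eventually.of_forall fun t ht => ?_
    have b1 : ‖Complex.exp (((t * T : ℝ) : ℂ) * x * Complex.I) -
      Complex.exp (((t * T : ℝ) : ℂ) * x' * Complex.I)‖ ≤ t * (T * (x - x')) := by
      have : Complex.exp (((t * T : ℝ) : ℂ) * x * Complex.I) -
        Complex.exp (((t * T : ℝ) : ℂ) * x' * Complex.I) =
        Complex.exp (((t * T * x' : ℝ) : ℂ) * Complex.I) *
          (Complex.exp (Complex.I * (t * (T * (x - x')) : ℝ)) - 1) := by
        rw [mul_sub, ← Complex.exp_add, mul_one]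
        congr 2 <;> push_cast <;> ring
      rw [this, norm_mul, Complex.norm_exp_ofReal_mul_I, one_mul]
      refine Real.norm_exp_I_mul_ofReal_sub_one_le.trans ?_
      rw [Real.norm_eq_abs, abs_of_nonneg (mul_nonneg ht.1.le (mul_nonneg hT.le (by linarith)))]
    have b2 := norm_charFun_le_one (μ := μ) (-(t * T))
    have b3 := (Complex.abs_im_le_norm ((Complex.exp (((t * T : ℝ) : ℂ) * x * Complex.I) -
      Complex.exp (((t * T : ℝ) : ℂ) * x' * Complex.I)) * charFun μ (-(t * T))))
    rw [norm_mul] at b3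
    have b4 := mul_le_mul b1 b2 (norm_nonneg _) ((norm_nonneg _).trans b1)
    rw [norm_mul, norm_div, Real.norm_eq_abs, Real.norm_eq_abs, Real.norm_eq_abs, abs_of_pos ht.1,
      abs_of_nonneg (by linarith [ht.2] : 0 ≤ 1 - t)]
    have h2 := div_le_div_of_nonneg_right (b3.trans b4) ht.1.le
    rw [mul_one, mul_div_cancel_left₀ _ ht.1.ne'] at h2
    have h3 := mul_le_mul (by linarith [ht.1] : 1 - t ≤ 1) h2
      (div_nonneg (abs_nonneg _) ht.1.le) zero_le_one
    linarith
  rw [e1, Fs_sub μ hT hx', Fs_sub γ hT hx', ← intervalIntegral.integral_sub (hInt0 μ) (hInt0 γ)]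
  have e2 : 2 * ∫ t in (0 : ℝ)..T, h t = ∫ t in (0 : ℝ)..1, 2 * (T * h (t * T)) := by
    rw [intervalIntegral.integral_const_mul, intervalIntegral.integral_const_mul,
      intervalIntegral.integral_comp_mul_right _ hT.ne']
    simp only [zero_mul, one_mul, smul_eq_mul]
    field_simp
  rw [e2, ← Real.norm_eq_abs]
  refine intervalIntegral.norm_integral_le_of_norm_le zero_le_one ?_ ?_
  · refine Filter.Eventually.of_forall fun t ht => ?_
    have tT : 0 < t * T := mul_pos ht.1 hT
    have hb' : ‖charFun μ (-(t * T)) - charFun γ (-(t * T))‖ ≤ t * T * h (t * T) := by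
      rw [charFun_neg, charFun_neg, ← map_sub, RCLike.norm_conj]
      exact hb _ tT (by nlinarith [ht.2])
    rw [← mul_sub, ← sub_div, ← Complex.sub_im, ← mul_sub]
    have b3 := (Complex.abs_im_le_norm ((Complex.exp (((t * T : ℝ) : ℂ) * x * Complex.I) -
      Complex.exp (((t * T : ℝ) : ℂ) * x' * Complex.I)) *
        (charFun μ (-(t * T)) - charFun γ (-(t * T)))))
    rw [norm_mul] at b3
    have b1 : ‖Complex.exp (((t * T : ℝ) : ℂ) * x * Complex.I) -
      Complex.exp (((t * T : ℝ) : ℂ) * x' * Complex.I)‖ ≤ 2 := by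
      refine (norm_sub_le _ _).trans ?_
      rw [← Complex.ofReal_mul, ← Complex.ofReal_mul, Complex.norm_exp_ofReal_mul_I,
        Complex.norm_exp_ofReal_mul_I]
      norm_num
    have b4 := mul_le_mul b1 hb' (norm_nonneg _) zero_le_two
    rw [norm_mul, norm_div, Real.norm_eq_abs, Real.norm_eq_abs, Real.norm_eq_abs, abs_of_pos ht.1,
      abs_of_nonneg (by linarith [ht.2] : 0 ≤ 1 - t)]
    have h2 := div_le_div_of_nonneg_right (b3.trans b4) ht.1.le
    have e3 : 2 * (t * T * h (t * T)) / t = 2 * (T * h (t * T)) := by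
      have := ht.1.ne'
      field_simp
    rw [e3] at h2
    have h3 := mul_le_mul (by linarith [ht.1] : 1 - t ≤ 1) h2
      (div_nonneg (abs_nonneg _) ht.1.le) zero_le_one
    linarith
  · apply Continuous.intervalIntegrable
    fun_prop

theorem Fs_eq (μ : Measure ℝ) [IsProbabilityMeasure μ] {T : ℝ} (hT : 0 < T) (x : ℝ) :
    ∫ y, Hk (T * (x - y)) ∂μ = ∫ z, kf z * μ.real (Set.Iic (x - z / T)) := by
  have e1 : ∀ y, Hk (T * (x - y)) = ∫ z, (Set.Iic (T * (x - y))).indicator kf z := fun y => by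
    rw [integral_indicator measurableSet_Iic]; rfl
  simp_rw [e1]
  rw [integral_integral_swap]
  · congr 1
    ext z
    have e2 : ∀ y, (Set.Iic (T * (x - y))).indicator kf z =
        (Set.Iic (x - z / T)).indicator (fun _ => kf z) y := by
      intro y
      have : z ∈ Set.Iic (T * (x - y)) ↔ y ∈ Set.Iic (x - z / T) := by
        simp only [Set.mem_Iic]
        rw [le_sub_comm, div_le_iff₀ hT, mul_comm]
      by_cases h : z ∈ Set.Iic (T * (x - y))
      · rw [Set.indicator_of_mem h, Set.indicator_of_mem (this.1 h)]
      · rw [Set.indicator_of_notMem h, Set.indicator_of_notMem (fun h' => h (this.2 h'))]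
    simp_rw [e2]
    rw [integral_indicator measurableSet_Iic, setIntegral_const, smul_eq_mul, mul_comm]
  · have hi : Integrable (fun q : ℝ × ℝ => kf q.2) (μ.prod volume) := kf_integrable.comp_snd μ
    have hs : MeasurableSet {q : ℝ × ℝ | q.2 ≤ T * (x - q.1)} :=
      measurableSet_le (by fun_prop) (by fun_prop)
    refine (hi.indicator hs).congr (Filter.Eventually.of_forall ?_)
    rintro ⟨y, z⟩
    simp only [Function.uncurry, Set.indicator, Set.mem_ofPred_eq, Set.mem_Iic]

theorem unsmooth {η a T x1 q0 S : ℝ} {Δ : ℝ → ℝ} (hm : Measurable Δ) (hη : ∀ u, |Δ u| ≤ η)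
    (ha0 : 0 ≤ a)
    (ha : 3 / 4 * ∫ y, kf y ≤ ∫ z in -a..a, kf z)
    (hq : ∀ z ∈ Set.Ioc (-a) a, q0 ≤ Δ (x1 - z / T))
    (hS : ∫ z, kf z * Δ (x1 - z / T) ≤ S) (hS0 : 0 ≤ S) :
    q0 ≤ η / 3 + 4 / 3 * (S / ∫ y, kf y) := by
  have J0 := kf_pos
  set J := ∫ y, kf y with hJ
  have η0 : 0 ≤ η := (abs_nonneg _).trans (hη 0)
  have SJ : 0 ≤ S / J := by positivity
  by_cases hq0 : q0 + η ≤ 0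
  · linarith
  push Not at hq0
  have key : -η * J + (q0 + η) * (∫ z in -a..a, kf z) ≤ S := by
    refine le_trans (le_of_eq ?_) (le_trans (integral_mono
      (f := fun z => -η * kf z + (q0 + η) * (Set.Ioc (-a) a).indicator kf z) ?_ ?_ ?_) hS)
    · rw [integral_add (kf_integrable.const_mul _)
        ((kf_integrable.indicator measurableSet_Ioc).const_mul _), integral_const_mul,
        integral_const_mul, integral_indicator measurableSet_Ioc,
        intervalIntegral.integral_of_le (by linarith)]
    · exact (kf_integrable.const_mul _).add
        ((kf_integrable.indicator measurableSet_Ioc).const_mul _)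
    · refine kf_integrable.mul_bdd (c := η) ?_ ?_
      · exact (hm.comp (by fun_prop)).aestronglyMeasurable
      · exact Filter.Eventually.of_forall fun z => hη _
    · intro z
      have k0 := kf_nonneg z
      simp only
      by_cases hz : z ∈ Set.Ioc (-a) a
      · rw [Set.indicator_of_mem hz]
        have := hq z hz
        nlinarith
      · rw [Set.indicator_of_notMem hz]
        have := (abs_le.1 (hη (x1 - z / T))).1
        nlinarith
  have h2 : (q0 + η) * (3 / 4 * J) ≤ (q0 + η) * (∫ z in -a..a, kf z) :=
    mul_le_mul_of_nonneg_left ha hq0.le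
  have h3 : (3 / 4 * q0 - η / 4) * J ≤ S := by nlinarith
  rw [← le_div_iff₀ J0] at h3
  linarith

theorem esseen : ∃ C : ℝ, 0 < C ∧ ∀ (μ γ : Measure ℝ) [IsProbabilityMeasure μ]
    [IsProbabilityMeasure γ] (m T : ℝ) (h : ℝ → ℝ), 0 ≤ m → 0 < T →
    (∀ x y, x ≤ y → γ.real (Set.Iic y) - γ.real (Set.Iic x) ≤ m * (y - x)) →
    Continuous h → (∀ t, 0 ≤ t → 0 ≤ h t) →
    (∀ t, 0 < t → t ≤ T → ‖charFun μ t - charFun γ t‖ ≤ t * h t) →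
    ∀ x, |μ.real (Set.Iic x) - γ.real (Set.Iic x)| ≤ C * ((∫ t in (0 : ℝ)..T, h t) + m / T) := by
  have J0 := kf_pos
  obtain ⟨a, ha0, ha⟩ : ∃ a : ℝ, 0 ≤ a ∧ 3 / 4 * ∫ y, kf y ≤ ∫ z in -a..a, kf z := by
    have := intervalIntegral_tendsto_integral kf_integrable
      (tendsto_neg_atTop_atBot (G := ℝ)) tendsto_id
    have h1 := this.eventually (lt_mem_nhds (show 3 / 4 * ∫ y, kf y < ∫ y, kf y by linarith))
    obtain ⟨a, h2, h3⟩ := (h1.and (Filter.eventually_ge_atTop 0)).exists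
    exact ⟨a, h3, h2.le⟩
  set J := ∫ y, kf y with hJ
  refine ⟨3 * a + 4 / J, by positivity, ?_⟩
  intro μ γ _ _ m T h hm hT hG hc h0 hb x
  set F := fun u => μ.real (Set.Iic u) with hF
  set G := fun u => γ.real (Set.Iic u) with hGd
  have Fm : Monotone F := fun u v huv => measureReal_mono (Set.Iic_subset_Iic.2 huv)
  have Gm : Monotone G := fun u v huv => measureReal_mono (Set.Iic_subset_Iic.2 huv)
  have hFb : ∀ u, 0 ≤ F u ∧ F u ≤ 1 := fun u => ⟨measureReal_nonneg, measureReal_le_one⟩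
  have hGb : ∀ u, 0 ≤ G u ∧ G u ≤ 1 := fun u => ⟨measureReal_nonneg, measureReal_le_one⟩
  have bdd : BddAbove (Set.range fun u => |F u - G u|) := by
    refine ⟨1, ?_⟩
    rintro _ ⟨u, rfl⟩
    simp only
    have := hFb u
    have := hGb u
    rw [abs_le]; constructor <;> linarith
  set η := ⨆ u, |F u - G u| with hη
  have hle : ∀ u, |F u - G u| ≤ η := fun u => le_ciSup bdd u
  set I := ∫ t in (0 : ℝ)..T, h t with hI
  have I0 : 0 ≤ I := intervalIntegral.integral_nonneg hT.le fun t ht => h0 t ht.1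
  have hS : ∀ x, |∫ z, kf z * (F (x - z / T) - G (x - z / T))| ≤ 2 * I := by
    intro x
    have := smooth_bound μ γ hT h hc hb x
    rw [Fs_eq μ hT, Fs_eq γ hT] at this
    have ii : ∀ (F : ℝ → ℝ), Monotone F → (∀ u, 0 ≤ F u ∧ F u ≤ 1) →
        Integrable fun z => kf z * F (x - z / T) := by
      intro F hF hb
      refine kf_integrable.mul_bdd (c := 1) ?_ ?_
      · exact (hF.measurable.comp (by fun_prop)).aestronglyMeasurable
      · refine Filter.Eventually.of_forall fun z => ?_
        rw [Real.norm_eq_abs, abs_le]; constructor <;> linarith [(hb (x - z / T)).1, (hb (x - z / T)).2]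
    rw [← integral_sub (ii F Fm hFb) (ii G Gm hGb)] at this
    simp_rw [mul_sub]
    exact this
  have haz : ∀ z ∈ Set.Ioc (-a) a, -(a / T) ≤ z / T ∧ z / T ≤ a / T := fun z hz => by
    constructor
    · rw [← neg_div]; exact div_le_div_of_nonneg_right hz.1.le hT.le
    · exact div_le_div_of_nonneg_right hz.2 hT.le
  have step : ∀ u, |F u - G u| ≤ η / 3 + 4 / 3 * (2 * I / J) + m * (2 * (a / T)) := by
    intro u
    rw [abs_le']
    constructor
    · have := unsmooth (q0 := F u - G u - m * (2 * (a / T))) (x1 := u + a / T) (T := T)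
        (Δ := fun u => F u - G u)
        (Fm.measurable.sub Gm.measurable) hle ha0 ha ?_ (le_of_abs_le (hS (u + a / T)))
        (by positivity)
      · linarith
      · intro z hz
        obtain ⟨h1, h2⟩ := haz z hz
        have h3 := Fm (show u ≤ u + a / T - z / T by linarith)
        have h4 := hG u (u + a / T - z / T) (by linarith)
        have h5 : m * (u + a / T - z / T - u) ≤ m * (2 * (a / T)) :=
          mul_le_mul_of_nonneg_left (by linarith) hm
        simp only [hGd] at *
        linarith
    · have := unsmooth (q0 := -(F u - G u) - m * (2 * (a / T))) (x1 := u - a / T) (T := T)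
        (Δ := fun u => -(F u - G u)) (S := 2 * I)
        (Fm.measurable.sub Gm.measurable).neg (fun u => by rw [abs_neg]; exact hle u)
        ha0 ha ?_ ?_
        (by positivity)
      · linarith
      · intro z hz
        obtain ⟨h1, h2⟩ := haz z hz
        have h3 := Fm (show u - a / T - z / T ≤ u by linarith)
        have h4 := hG (u - a / T - z / T) u (by linarith)
        have h5 : m * (u - (u - a / T - z / T)) ≤ m * (2 * (a / T)) :=
          mul_le_mul_of_nonneg_left (by linarith) hm
        simp only [hGd] at *
        linarith
      · simp_rw [mul_neg]
        rw [integral_neg]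
        have := (abs_le.1 (hS (u - a / T))).1
        linarith
  have h1 : η ≤ η / 3 + 4 / 3 * (2 * I / J) + m * (2 * (a / T)) := ciSup_le step
  have h2 := hle x
  have e : (3 * a + 4 / J) * (I + m / T) = 3 * a * I + 4 * (I / J) + 3 * (m * (a / T)) + 4 / J * (m / T) := by
    field_simp
    ring
  rw [e]
  have p1 : 0 ≤ 3 * a * I := by positivity
  have p2 : 0 ≤ 4 / J * (m / T) := by positivity
  have e2 : 2 * I / J = 2 * (I / J) := by ring
  rw [e2] at h1
  linarith

end Esseen

/-! ### Abstract perturbation argument -/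
section Abstract

/-- `φ` is Lipschitz with constant `c` with respect to `db`. -/
def LipD {X : Type*} [TopologicalSpace X] (db : X → X → ℝ) (c : ℝ) (φ : X →ᵇ ℂ) : Prop :=
  ∀ x y, ‖φ x - φ y‖ ≤ c * db x y

/-- A transfer operator contracting the Lipschitz seminorm, and its invariant functional. -/
structure GapData {X : Type*} [TopologicalSpace X] (L : (X →ᵇ ℂ) →ₗ[ℂ] (X →ᵇ ℂ))
    (N : (X →ᵇ ℂ) →ₗ[ℂ] ℂ) (db : X → X → ℝ) (r : ℝ) : Prop where
  db0 : ∀ x y, 0 ≤ db x y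
  db1 : ∀ x y, db x y ≤ 1
  r0 : 0 < r
  r1 : r < 1
  L1 : L 1 = 1
  N1 : N 1 = 1
  NL : ∀ φ, N (L φ) = N φ
  Nb : ∀ φ, ‖N φ‖ ≤ ‖φ‖
  con : ∀ c φ, 0 ≤ c → LipD db c φ → LipD db (r * c) (L φ)

variable {X : Type*} [TopologicalSpace X] {L : (X →ᵇ ℂ) →ₗ[ℂ] (X →ᵇ ℂ)}
    {N : (X →ᵇ ℂ) →ₗ[ℂ] ℂ} {db : X → X → ℝ} {r : ℝ}

theorem bcf_one_apply (x : X) : (1 : X →ᵇ ℂ) x = 1 := rfl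

theorem bcf_zero_apply (x : X) : (0 : X →ᵇ ℂ) x = 0 := rfl

theorem LipD.add {c d : ℝ} {φ ψ : X →ᵇ ℂ} (h1 : LipD db c φ) (h2 : LipD db d ψ) :
    LipD db (c + d) (φ + ψ) := by
  intro x y
  have := norm_add_le (φ x - φ y) (ψ x - ψ y)
  have e : (φ + ψ) x - (φ + ψ) y = (φ x - φ y) + (ψ x - ψ y) := by
    simp only [BoundedContinuousFunction.add_apply]; ring
  rw [e]
  have a := h1 x y
  have b := h2 x y
  nlinarith

theorem LipD.smul {c : ℝ} {φ : X →ᵇ ℂ} (z : ℂ) (h1 : LipD db c φ) :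
    LipD db (‖z‖ * c) (z • φ) := by
  intro x y
  have e : (z • φ) x - (z • φ) y = z * (φ x - φ y) := by
    simp only [BoundedContinuousFunction.smul_apply, smul_eq_mul]; ring
  rw [e, norm_mul, mul_assoc]
  exact mul_le_mul_of_nonneg_left (h1 x y) (norm_nonneg _)

theorem LipD.const (z : ℂ) : LipD db 0 (z • (1 : X →ᵇ ℂ)) := by
  intro x y
  simp

theorem LipD.mono (hdb : ∀ x y, 0 ≤ db x y) {c d : ℝ} {φ : X →ᵇ ℂ} (h1 : LipD db c φ)
    (h : c ≤ d) : LipD db d φ := fun x y =>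
  (h1 x y).trans (mul_le_mul_of_nonneg_right h (hdb x y))

theorem LipD.mul {c d a b : ℝ} {φ ψ : X →ᵇ ℂ} (h1 : LipD db c φ)
    (h2 : LipD db d ψ) (ha : ‖φ‖ ≤ a) (hb : ‖ψ‖ ≤ b) :
    LipD db (a * d + c * b) (φ * ψ) := by
  intro x y
  have e : (φ * ψ) x - (φ * ψ) y = φ x * (ψ x - ψ y) + (φ x - φ y) * ψ y := by
    simp only [BoundedContinuousFunction.mul_apply]; ring
  rw [e]
  refine (norm_add_le _ _).trans ?_
  rw [norm_mul, norm_mul]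
  have a1 := (φ.norm_coe_le_norm x).trans ha
  have a2 := (ψ.norm_coe_le_norm y).trans hb
  have b1 := mul_le_mul a1 (h2 x y) (norm_nonneg _) ((norm_nonneg _).trans a1)
  have b2 := mul_le_mul (h1 x y) a2 (norm_nonneg _) ((norm_nonneg _).trans (h1 x y))
  nlinarith

theorem GapData.norm_le (H : GapData L N db r) {c : ℝ} (hc : 0 ≤ c) {φ : X →ᵇ ℂ}
    (h : LipD db c φ) (h0 : N φ = 0) : ‖φ‖ ≤ c := by
  rw [BoundedContinuousFunction.norm_le hc]
  intro x
  have h1 : N (φ x • (1 : X →ᵇ ℂ) - φ) = φ x := by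
    rw [map_sub, map_smul, H.N1, h0]; simp
  rw [← h1]
  refine (H.Nb _).trans ?_
  rw [BoundedContinuousFunction.norm_le hc]
  intro y
  have := h x y
  have e : (φ x • (1 : X →ᵇ ℂ) - φ) y = φ x - φ y := by simp
  rw [e]
  have := H.db1 x y
  nlinarith [H.db0 x y]

/-- The normalised iterates, minus one. -/
def wseq (L : (X →ᵇ ℂ) →ₗ[ℂ] (X →ᵇ ℂ)) (N : (X →ᵇ ℂ) →ₗ[ℂ] ℂ) (e : X →ᵇ ℂ) : ℕ → (X →ᵇ ℂ)
  | 0 => 0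
  | n + 1 => (N (e * (1 + wseq L N e n)))⁻¹ • L (e * (1 + wseq L N e n)) - 1

/-- The one-step growth factors. -/
def lam (L : (X →ᵇ ℂ) →ₗ[ℂ] (X →ᵇ ℂ)) (N : (X →ᵇ ℂ) →ₗ[ℂ] ℂ) (e : X →ᵇ ℂ) (n : ℕ) : ℂ :=
  N (e * (1 + wseq L N e n))

/-- The first order corrections. -/
def gseq (L : (X →ᵇ ℂ) →ₗ[ℂ] (X →ᵇ ℂ)) (ξ : X →ᵇ ℂ) : ℕ → (X →ᵇ ℂ)
  | 0 => 0
  | n + 1 => L (gseq L ξ n + ξ)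

theorem gseq_N (H : GapData L N db r) {ξ : X →ᵇ ℂ} (h : N ξ = 0) (n : ℕ) : N (gseq L ξ n) = 0 := by
  induction n with
  | zero => simp [gseq]
  | succ k ih => simp [gseq, H.NL, ih, h]

theorem gseq_step (H : GapData L N db r) {ξ : X →ᵇ ℂ} {K : ℝ} (hK : 0 ≤ K)
    (hξ : LipD db K ξ) (n : ℕ) : LipD db (K * r ^ (n + 1)) (gseq L ξ (n + 1) - gseq L ξ n) := by
  induction n with
  | zero =>
    simp only [gseq, zero_add, sub_zero, pow_one]
    rw [mul_comm]
    exact H.con _ _ hK hξ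
  | succ k ih =>
    have e : gseq L ξ (k + 1 + 1) - gseq L ξ (k + 1) = L (gseq L ξ (k + 1) - gseq L ξ k) := by
      rw [map_sub]
      conv_lhs => simp only [gseq]
      simp only [gseq, map_add]
      abel
    rw [e]
    have := H.con _ _ (by have := H.r0; positivity) ih
    convert this using 1
    ring

theorem gseq_dist (H : GapData L N db r) {ξ : X →ᵇ ℂ} {K : ℝ} (hK : 0 ≤ K)
    (hξ : LipD db K ξ) (hn : ‖ξ‖ ≤ K) (h0 : N ξ = 0) (n : ℕ) :
    ‖N (ξ * gseq L ξ (n + 1)) - N (ξ * gseq L ξ n)‖ ≤ K * (K * r ^ (n + 1)) := by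
  rw [← map_sub, ← mul_sub]
  refine (H.Nb _).trans ((norm_mul_le _ _).trans ?_)
  refine mul_le_mul hn ?_ (norm_nonneg _) hK
  refine H.norm_le (by have := H.r0; positivity) (gseq_step H hK hξ n) ?_
  rw [map_sub, gseq_N H h0, gseq_N H h0, sub_zero]

theorem e_estimates {ξ e : X →ᵇ ℂ} {ξr : X → ℝ} {t K τ : ℝ} (hτ : |t| = τ) (hK : 0 ≤ K)
    (hξr : ∀ x, ξ x = ξr x) (he : ∀ x, e x = Complex.exp (Complex.I * (t * ξr x : ℝ)))
    (hn : ∀ x, |ξr x| ≤ K) (hl : ∀ x y, |ξr x - ξr y| ≤ K * db x y) (hKτ : 2 * K * τ ≤ 1) :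
    ‖e - 1‖ ≤ K * τ ∧ LipD db (K * τ) (e - 1) ∧
    ‖e - 1 - (Complex.I * t) • ξ‖ ≤ K ^ 2 * τ ^ 2 ∧
    LipD db (3 * K ^ 2 * τ ^ 2) (e - 1 - (Complex.I * t) • ξ) ∧
    ‖e - 1 - (Complex.I * t) • ξ + ((t : ℂ) ^ 2 / 2) • (ξ * ξ)‖ ≤ K ^ 3 * τ ^ 3 := by
  have τ0 : 0 ≤ τ := hτ ▸ abs_nonneg t
  have b1 : ∀ x, |t * ξr x| ≤ K * τ := fun x => by
    rw [abs_mul, hτ, mul_comm]; exact mul_le_mul_of_nonneg_right (hn x) τ0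
  have nI : ∀ s : ℝ, ‖Complex.I * (s : ℂ)‖ = |s| := fun s => by simp
  have E1 : ∀ s : ℝ, ‖Complex.exp (Complex.I * s) - 1‖ ≤ |s| := fun s =>
    Real.norm_exp_I_mul_ofReal_sub_one_le
  have E2 : ∀ s : ℝ, |s| ≤ 1 → ‖Complex.exp (Complex.I * s) - 1 - Complex.I * s‖ ≤ |s| ^ 2 :=
    fun s hs => by
      have := Complex.norm_exp_sub_one_sub_id_le (x := Complex.I * s) (by rwa [nI])
      rwa [nI] at this
  have E3 : ∀ s : ℝ, |s| ≤ 1 → ‖Complex.exp (Complex.I * s) - 1 - Complex.I * s + (s : ℂ) ^ 2 / 2‖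
      ≤ |s| ^ 3 := fun s hs => by
    have := Complex.exp_bound (x := Complex.I * s) (by rwa [nI]) (n := 3) (by norm_num)
    rw [nI] at this
    have e : Complex.exp (Complex.I * s) - ∑ m ∈ Finset.range 3, (Complex.I * s) ^ m / (m.factorial : ℂ)
        = Complex.exp (Complex.I * s) - 1 - Complex.I * s + (s : ℂ) ^ 2 / 2 := by
      simp only [Finset.sum_range_succ, Finset.sum_range_zero, mul_pow, Complex.I_sq]
      norm_num [Nat.factorial]
      ring
    rw [e] at this
    refine this.trans ?_
    have h0 : 0 ≤ |s| ^ 3 := by positivity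
    norm_num [Nat.factorial]
    nlinarith
  have bd : ∀ x y, |t * ξr x - t * ξr y| ≤ τ * K * db x y := fun x y => by
    rw [← mul_sub, abs_mul, hτ, mul_assoc]
    exact mul_le_mul_of_nonneg_left (hl x y) τ0
  have b2 : ∀ x y, |t * ξr x - t * ξr y| ≤ 2 * K * τ := fun x y => by
    refine (abs_sub _ _).trans ?_
    have := b1 x
    have := b1 y
    linarith
  have ef : ∀ a b : ℝ, Complex.exp (Complex.I * a) = Complex.exp (Complex.I * b) *
      Complex.exp (Complex.I * (a - b : ℝ)) := fun a b => by
    rw [← Complex.exp_add]; congr 1; push_cast; ring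
  have nE : ∀ s : ℝ, ‖Complex.exp (Complex.I * s)‖ = 1 := Complex.norm_exp_I_mul_ofReal
  refine ⟨?_, ?_, ?_, ?_, ?_⟩
  · rw [BoundedContinuousFunction.norm_le (by positivity)]
    intro x
    simp only [BoundedContinuousFunction.sub_apply, bcf_one_apply, he]
    exact (E1 _).trans (b1 x)
  · intro x y
    simp only [BoundedContinuousFunction.sub_apply, bcf_one_apply, he]
    rw [ef (t * ξr x) (t * ξr y)]
    rw [show ∀ u v : ℂ, u * v - 1 - (u - 1) = u * (v - 1) from fun u v => by ring, norm_mul, nE,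
      one_mul]
    refine (E1 _).trans ((bd x y).trans (le_of_eq (by ring)))
  · rw [BoundedContinuousFunction.norm_le (by positivity)]
    intro x
    simp only [BoundedContinuousFunction.sub_apply, bcf_one_apply, he,
      BoundedContinuousFunction.smul_apply, hξr, smul_eq_mul]
    have := E2 (t * ξr x) (by linarith [b1 x, mul_nonneg hK τ0])
    push_cast at this ⊢
    rw [mul_assoc]
    refine this.trans ?_
    rw [← mul_pow]
    gcongr
    exact b1 x
  · intro x y
    simp only [BoundedContinuousFunction.sub_apply, bcf_one_apply, he,
      BoundedContinuousFunction.smul_apply, hξr, smul_eq_mul]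
    have h1 := E2 (t * ξr x - t * ξr y) ((b2 x y).trans hKτ)
    have h2 := E1 (t * ξr y)
    have h3 := bd x y
    have key : Complex.exp (Complex.I * (t * ξr x : ℝ)) - 1 - Complex.I * t * ξr x -
        (Complex.exp (Complex.I * (t * ξr y : ℝ)) - 1 - Complex.I * t * ξr y) =
        Complex.exp (Complex.I * (t * ξr y : ℝ)) *
          (Complex.exp (Complex.I * (t * ξr x - t * ξr y : ℝ)) - 1
            - Complex.I * (t * ξr x - t * ξr y : ℝ)) +
        (Complex.exp (Complex.I * (t * ξr y : ℝ)) - 1) *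
          (Complex.I * (t * ξr x - t * ξr y : ℝ)) := by
      rw [ef (t * ξr x) (t * ξr y)]
      push_cast
      ring
    rw [key]
    refine (norm_add_le _ _).trans ?_
    rw [norm_mul, norm_mul, nE, one_mul, nI]
    set δ := |t * ξr x - t * ξr y|
    have d0 : 0 ≤ δ := abs_nonneg _
    have h4 := b2 x y
    have h5 := b1 y
    have h6 : |t * ξr y| * δ ≤ K * τ * δ := mul_le_mul_of_nonneg_right h5 d0
    have h7 : ‖Complex.exp (Complex.I * (t * ξr y : ℝ)) - 1‖ * δ ≤ K * τ * δ :=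
      mul_le_mul_of_nonneg_right (h2.trans h5) d0
    have h8 : δ ^ 2 ≤ 2 * K * τ * δ := by
      rw [sq]; exact mul_le_mul_of_nonneg_right h4 d0
    have h9 : 3 * K * τ * δ ≤ 3 * K * τ * (τ * K * db x y) :=
      mul_le_mul_of_nonneg_left h3 (by positivity)
    nlinarith
  · rw [BoundedContinuousFunction.norm_le (by positivity)]
    intro x
    simp only [BoundedContinuousFunction.sub_apply, bcf_one_apply, he,
      BoundedContinuousFunction.smul_apply, hξr, smul_eq_mul, BoundedContinuousFunction.add_apply,
      BoundedContinuousFunction.mul_apply]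
    have := E3 (t * ξr x) (by linarith [b1 x, mul_nonneg hK τ0])
    push_cast at this ⊢
    have h : |t * ξr x| ^ 3 ≤ (K * τ) ^ 3 := by
      gcongr
      exact b1 x
    rw [mul_pow] at h
    refine (le_of_eq ?_).trans (this.trans h)
    congr 1
    ring

/-- Main perturbation estimate. -/
theorem perturb (H : GapData L N db r) {ξ e : X →ᵇ ℂ} {t K τ r' A B : ℝ} (hτ : |t| = τ)
    (hK : 1 ≤ K)
    (e1 : ‖e - 1‖ ≤ K * τ) (e2 : LipD db (K * τ) (e - 1))
    (e3 : ‖e - 1 - (Complex.I * t) • ξ‖ ≤ K ^ 2 * τ ^ 2)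
    (e4 : LipD db (3 * K ^ 2 * τ ^ 2) (e - 1 - (Complex.I * t) • ξ))
    (e5 : ‖e - 1 - (Complex.I * t) • ξ + ((t : ℂ) ^ 2 / 2) • (ξ * ξ)‖ ≤ K ^ 3 * τ ^ 3)
    (hξn : ‖ξ‖ ≤ K) (hξ0 : N ξ = 0)
    (ht1 : (1 + 4 * K * τ) * r ≤ r') (hr' : r' < 1) (hA : A * (1 - r') = 3 * K)
    (hB : B * (1 - r) = 3 * K ^ 2 + 2 * K * A + 4 * K * (A + 3 * K))
    (ht2 : A * τ ≤ 1) (ht3 : 4 * K * τ ≤ 1) (n : ℕ) :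
    lam L N e n ≠ 0 ∧ N (wseq L N e n) = 0 ∧
    ‖lam L N e n - (1 - (t : ℂ) ^ 2 / 2 * (N (ξ * ξ) + 2 * N (ξ * gseq L ξ n)))‖
      ≤ (K ^ 3 + K ^ 2 * A + K * B) * τ ^ 3 := by
  have τ0 : 0 ≤ τ := hτ ▸ abs_nonneg t
  have r0 := H.r0
  have r1 := H.r1
  have A0 : 0 ≤ A := by
    have : 0 ≤ A * (1 - r') := by rw [hA]; positivity
    exact nonneg_of_mul_nonneg_left this (by linarith)
  have B0 : 0 ≤ B := by
    have : 0 ≤ B * (1 - r) := by rw [hB]; positivity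
    exact nonneg_of_mul_nonneg_left this (by linarith)
  have hIt : ‖Complex.I * (t : ℂ)‖ = τ := by simp [hτ]
  -- facts for a given `w`
  have facts : ∀ w : X →ᵇ ℂ, N w = 0 → LipD db (A * τ) w →
      ‖w‖ ≤ A * τ ∧ LipD db (3 * K * τ) ((e - 1) * (1 + w)) ∧
      ‖N (e * (1 + w)) - 1‖ ≤ 2 * K * τ ∧ N (e * (1 + w)) ≠ 0 ∧
      ‖(N (e * (1 + w)))⁻¹‖ ≤ 1 + 4 * K * τ ∧ ‖(N (e * (1 + w)))⁻¹ - 1‖ ≤ 4 * K * τ := by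
    intro w hw0 hwl
    have hwn := H.norm_le (by positivity) hwl hw0
    have h1w : ‖1 + w‖ ≤ 2 := by
      rw [BoundedContinuousFunction.norm_le (by norm_num)]
      intro x
      have := norm_add_le (1 : ℂ) (w x)
      have h2 := w.norm_coe_le_norm x
      simp only [BoundedContinuousFunction.add_apply, bcf_one_apply]
      rw [norm_one] at this
      linarith
    have l1w : LipD db (A * τ) (1 + w) := by
      have := (LipD.const (db := db) 1).add hwl
      simpa using this
    have hR := LipD.mul e2 l1w e1 h1w
    have hR' : LipD db (3 * K * τ) ((e - 1) * (1 + w)) := by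
      refine hR.mono H.db0 ?_
      have : K * τ * (A * τ) ≤ K * τ * 1 := mul_le_mul_of_nonneg_left ht2 (by positivity)
      linarith
    have hl : ‖N (e * (1 + w)) - 1‖ ≤ 2 * K * τ := by
      have : N (e * (1 + w)) - 1 = N ((e - 1) * (1 + w)) := by
        rw [sub_mul, map_sub, one_mul, map_add N 1 w, H.N1, hw0, add_zero]
      rw [this]
      refine (H.Nb _).trans ((norm_mul_le _ _).trans ?_)
      have := mul_le_mul e1 h1w (norm_nonneg _) (by positivity)
      linarith
    set l := N (e * (1 + w))
    have hl2 : 1 - 2 * K * τ ≤ ‖l‖ := by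
      have := norm_sub_norm_le (1 : ℂ) l
      rw [norm_one, norm_sub_rev] at this
      linarith
    have hl3 : 1 / 2 ≤ ‖l‖ := by linarith
    have lne : l ≠ 0 := by
      intro h; rw [h, norm_zero] at hl3; linarith
    have hd : ‖l⁻¹ - 1‖ ≤ 4 * K * τ := by
      have : l⁻¹ - 1 = l⁻¹ * (1 - l) := by field_simp
      rw [this, norm_mul, norm_inv, norm_sub_rev]
      have h2 : ‖l‖⁻¹ ≤ 2 := by
        rw [inv_le_comm₀ (by linarith) (by norm_num)]; linarith
      have := mul_le_mul h2 hl (norm_nonneg _) (by norm_num)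
      linarith
    refine ⟨hwn, hR', hl, lne, ?_, hd⟩
    have := norm_add_le (l⁻¹ - 1) 1
    rw [sub_add_cancel, norm_one] at this
    linarith
  have main : ∀ n, N (wseq L N e n) = 0 ∧ LipD db (A * τ) (wseq L N e n) ∧
      LipD db (B * τ ^ 2) (wseq L N e n - (Complex.I * t) • gseq L ξ n) := by
    intro n
    induction n with
    | zero =>
      refine ⟨by simp [wseq], ?_, ?_⟩
      · intro x y
        simp only [wseq, bcf_zero_apply, sub_zero, norm_zero]
        have := H.db0 x y
        positivity
      · intro x y
        simp only [wseq, gseq, smul_zero, sub_zero, bcf_zero_apply, norm_zero]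
        have := H.db0 x y
        positivity
    | succ k ih =>
      obtain ⟨i1, i2, i3⟩ := ih
      obtain ⟨f1, f2, f3, f4, f5, f6⟩ := facts _ i1 i2
      set w := wseq L N e k with hw
      set l := N (e * (1 + w)) with hl
      have hw' : wseq L N e (k + 1) = l⁻¹ • L (e * (1 + w)) - 1 := by
        simp only [wseq, hl, hw]
      have hLe : L (e * (1 + w)) = 1 + L (w + (e - 1) * (1 + w)) := by
        have h1 : 1 + L (w + (e - 1) * (1 + w)) = L (1 + (w + (e - 1) * (1 + w))) := by
          rw [map_add L 1, H.L1]
        rw [h1]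
        congr 1
        rw [sub_mul, one_mul]; abel
      have lip1 : LipD db (r * (A * τ + 3 * K * τ)) (L (w + (e - 1) * (1 + w))) :=
        H.con _ _ (by positivity) (i2.add f2)
      refine ⟨?_, ?_, ?_⟩
      · rw [hw', map_sub, map_smul, H.NL, H.N1, ← hl, smul_eq_mul, inv_mul_cancel₀ f4, sub_self]
      · rw [hw', hLe]
        have : l⁻¹ • (1 + L (w + (e - 1) * (1 + w))) - 1 =
            (l⁻¹ - 1) • (1 : X →ᵇ ℂ) + l⁻¹ • L (w + (e - 1) * (1 + w)) := by
          rw [smul_add, sub_smul, one_smul]; abel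
        rw [this]
        refine ((LipD.const _).add (lip1.smul _)).mono H.db0 ?_
        rw [zero_add]
        have h1 : ‖l⁻¹‖ * r ≤ r' := (mul_le_mul_of_nonneg_right f5 r0.le).trans ht1
        have h2 : ‖l⁻¹‖ * r * (A * τ + 3 * K * τ) ≤ r' * (A * τ + 3 * K * τ) :=
          mul_le_mul_of_nonneg_right h1 (by positivity)
        have h3 : r' * (3 * K * τ) ≤ 3 * K * τ := by
          have : 0 ≤ 3 * K * τ := by positivity
          nlinarith
        have h4 : A * τ - r' * (A * τ) = 3 * K * τ := by
          rw [← hA]; ring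
        nlinarith
      · have key : wseq L N e (k + 1) - (Complex.I * t) • gseq L ξ (k + 1) =
            (l⁻¹ - 1) • (1 : X →ᵇ ℂ) + (L (w - (Complex.I * t) • gseq L ξ k) +
              (L ((e - 1 - (Complex.I * t) • ξ) + (e - 1) * w) +
              (l⁻¹ - 1) • L (w + (e - 1) * (1 + w)))) := by
          rw [hw', hLe]
          have a1 : (e - 1) * (1 + w) = (e - 1) + (e - 1) * w := by rw [mul_add, mul_one]
          rw [a1]
          simp only [gseq, map_add, map_sub, map_smul, smul_add, sub_smul, one_smul, H.L1]
          abel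
        rw [key]
        have l2 := H.con _ _ (by positivity) i3
        have l3 := H.con _ _ (by positivity) (e4.add (LipD.mul e2 i2 e1 f1))
        refine ((LipD.const _).add (l2.add (l3.add (lip1.smul (l⁻¹ - 1))))).mono H.db0 ?_
        rw [zero_add]
        have h1 : ‖l⁻¹ - 1‖ * (r * (A * τ + 3 * K * τ)) ≤ 4 * K * τ * (1 * (A * τ + 3 * K * τ)) := by
          gcongr
        have h2 : r * (3 * K ^ 2 * τ ^ 2 + (K * τ * (A * τ) + K * τ * (A * τ))) ≤
            1 * (3 * K ^ 2 * τ ^ 2 + (K * τ * (A * τ) + K * τ * (A * τ))) := by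
          gcongr
        have h3 : B * τ ^ 2 - r * (B * τ ^ 2) = (3 * K ^ 2 + 2 * K * A + 4 * K * (A + 3 * K)) * τ ^ 2 := by
          rw [← hB]; ring
        nlinarith
  obtain ⟨i1, i2, i3⟩ := main n
  obtain ⟨f1, f2, f3, f4, f5, f6⟩ := facts _ i1 i2
  refine ⟨f4, i1, ?_⟩
  unfold lam
  set w := wseq L N e n with hw
  have hz0 : N (w - (Complex.I * t) • gseq L ξ n) = 0 := by
    rw [map_sub, map_smul, i1, gseq_N H hξ0]; simp
  have hzn := H.norm_le (by positivity) i3 hz0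
  have key : N (e * (1 + w)) - (1 - (t : ℂ) ^ 2 / 2 * (N (ξ * ξ) + 2 * N (ξ * gseq L ξ n))) =
      N (e - 1 - (Complex.I * t) • ξ + ((t : ℂ) ^ 2 / 2) • (ξ * ξ)) +
      N ((e - 1 - (Complex.I * t) • ξ) * w) +
      (Complex.I * t) * N (ξ * (w - (Complex.I * t) • gseq L ξ n)) := by
    have a1 : e * (1 + w) = e + e * w := by rw [mul_add, mul_one]
    have a2 : (e - 1 - (Complex.I * t) • ξ) * w = e * w - w - (Complex.I * t) • (ξ * w) := by
      rw [sub_mul, sub_mul, one_mul, smul_mul_assoc]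
    have a3 : ξ * (w - (Complex.I * t) • gseq L ξ n) =
        ξ * w - (Complex.I * t) • (ξ * gseq L ξ n) := by
      rw [mul_sub, mul_smul_comm]
    rw [a1, a2, a3]
    simp only [map_add, map_sub, map_smul, H.N1, hξ0, i1, smul_eq_mul]
    have := Complex.I_sq
    linear_combination ((t : ℂ) ^ 2 * N (ξ * gseq L ξ n)) * this
  rw [key]
  refine (norm_add₃_le).trans ?_
  have n1 := (H.Nb _).trans e5
  have n2 : ‖N ((e - 1 - (Complex.I * t) • ξ) * w)‖ ≤ K ^ 2 * τ ^ 2 * (A * τ) :=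
    (H.Nb _).trans ((norm_mul_le _ _).trans (mul_le_mul e3 f1 (norm_nonneg _) (by positivity)))
  have n3 : ‖(Complex.I * t) * N (ξ * (w - (Complex.I * t) • gseq L ξ n))‖ ≤
      τ * (K * (B * τ ^ 2)) := by
    rw [norm_mul, hIt]
    refine mul_le_mul_of_nonneg_left ?_ τ0
    exact (H.Nb _).trans ((norm_mul_le _ _).trans
      (mul_le_mul hξn hzn (norm_nonneg _) (by positivity)))
  nlinarith

/-- Iterates of the perturbed operator. -/
theorem iterate_eq {e : X →ᵇ ℂ}
    (hne : ∀ n, lam L N e n ≠ 0) (n : ℕ) :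
    (fun φ => L (e * φ))^[n] 1 = (∏ k ∈ Finset.range n, lam L N e k) • (1 + wseq L N e n) := by
  induction n with
  | zero => simp [wseq]
  | succ k ih =>
    rw [Function.iterate_succ_apply', ih, Finset.prod_range_succ, mul_smul_comm, map_smul, mul_smul]
    congr 1
    simp only [wseq]
    rw [add_sub_cancel]
    have := hne k
    unfold lam at this ⊢
    rw [smul_smul, mul_inv_cancel₀ this, one_smul]

end Abstract

/-! ### Comparison of products and the rate -/
section Rate

theorem prod_compare {lm : ℕ → ℂ} {q β : ℝ} {ε δ : ℕ → ℝ} (hq0 : 0 ≤ q)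
    (hq : q ≤ Real.exp (-β)) (hε : ∀ k, ‖lm k - q‖ ≤ ε k)
    (hδ0 : ∀ k, 0 ≤ δ k) (hδ : ∀ k, ‖lm k‖ ≤ Real.exp (-β + δ k)) (n : ℕ) :
    ‖∏ k ∈ Finset.range n, lm k‖ ≤ Real.exp (-β * n + ∑ k ∈ Finset.range n, δ k) ∧
    ‖∏ k ∈ Finset.range n, lm k - (q : ℂ) ^ n‖ ≤ (∑ k ∈ Finset.range n, ε k) *
      Real.exp (β - β * n + ∑ k ∈ Finset.range n, δ k) := by
  induction n with
  | zero => simp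
  | succ n ih =>
    obtain ⟨h1, h2⟩ := ih
    have hεn : ∀ k, 0 ≤ ε k := fun k => (norm_nonneg _).trans (hε k)
    have hS : 0 ≤ ∑ k ∈ Finset.range n, ε k := Finset.sum_nonneg fun k _ => hεn k
    constructor
    · rw [Finset.prod_range_succ, Finset.sum_range_succ, norm_mul]
      refine (mul_le_mul h1 (hδ n) (norm_nonneg _) (Real.exp_pos _).le).trans ?_
      rw [← Real.exp_add]
      apply le_of_eq; congr 1; push_cast; ring
    · rw [Finset.prod_range_succ, Finset.sum_range_succ, Finset.sum_range_succ, pow_succ]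
      have e : (∏ k ∈ Finset.range n, lm k) * lm n - (q : ℂ) ^ n * q =
          (∏ k ∈ Finset.range n, lm k) * (lm n - q) +
          (∏ k ∈ Finset.range n, lm k - (q : ℂ) ^ n) * q := by ring
      rw [e]
      refine (norm_add_le _ _).trans ?_
      rw [norm_mul, norm_mul, Complex.norm_real, Real.norm_eq_abs, abs_of_nonneg hq0]
      have a1 := mul_le_mul h1 (hε n) (norm_nonneg _) (Real.exp_pos _).le
      have a2 := mul_le_mul h2 hq hq0 (mul_nonneg hS (Real.exp_pos _).le)
      rw [mul_assoc, ← Real.exp_add] at a2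
      have m1 : Real.exp (-β * n + ∑ k ∈ Finset.range n, δ k) ≤
          Real.exp (β - β * (n + 1 : ℕ) + (∑ k ∈ Finset.range n, δ k + δ n)) := by
        apply Real.exp_le_exp.2; push_cast; linarith [hδ0 n]
      have m2 : Real.exp (β - β * n + ∑ k ∈ Finset.range n, δ k + -β) ≤
          Real.exp (β - β * (n + 1 : ℕ) + (∑ k ∈ Finset.range n, δ k + δ n)) := by
        apply Real.exp_le_exp.2; push_cast; linarith [hδ0 n]
      have b1 := mul_le_mul_of_nonneg_right m1 (hεn n)
      have b2 := mul_le_mul_of_nonneg_left m2 hS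
      nlinarith

theorem geom_sum_le' {r : ℝ} (h0 : 0 < r) (h1 : r < 1) (n : ℕ) :
    ∑ k ∈ Finset.range n, r ^ k ≤ (1 - r)⁻¹ := by
  rw [← tsum_geometric_of_lt_one h0.le h1]
  exact (summable_geometric_of_lt_one h0.le h1).sum_le_tsum _ fun k _ => by positivity

theorem prod_gauss {s2 r C0 t0 : ℝ} (hs : 0 < s2) (hr0 : 0 < r) (hr1 : r < 1) (hC0 : 0 ≤ C0)
    (ht0 : 0 < t0) {lm : ℝ → ℕ → ℂ} {sg : ℕ → ℝ} (hsg : ∀ k, |sg k - s2| ≤ C0 * r ^ k)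
    (hlm : ∀ t, 0 < t → t ≤ t0 → ∀ k, ‖lm t k - (1 - (t : ℂ) ^ 2 / 2 * sg k)‖ ≤ C0 * t ^ 3) :
    ∃ t1 C : ℝ, 0 < t1 ∧ t1 ≤ t0 ∧ 0 ≤ C ∧ ∀ t, 0 < t → t ≤ t1 → ∀ n : ℕ,
      ‖∏ k ∈ Finset.range n, lm t k - (Real.exp (-(s2 * t ^ 2 / 2)) : ℂ) ^ n‖ ≤
        C * (n * t ^ 3 + t ^ 2) * Real.exp (-(s2 / 4) * (n * t ^ 2)) := by
  refine ⟨min t0 (min 1 (min (1 / s2) (s2 / (4 * (C0 + 1))))),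
    (C0 + s2 ^ 2) * (1 - r)⁻¹ * Real.exp (s2 + C0 * (1 - r)⁻¹), by positivity, min_le_left _ _, ?_, ?_⟩
  · have : 0 < 1 - r := by linarith
    positivity
  intro t ht htt n
  simp only [le_min_iff] at htt
  obtain ⟨h1, h2, h3, h4⟩ := htt
  rw [le_div_iff₀ hs] at h3
  rw [le_div_iff₀ (by positivity)] at h4
  have hr : 0 < 1 - r := by linarith
  have hri : 1 ≤ (1 - r)⁻¹ := by
    rw [one_le_inv₀ hr]; linarith
  have ht2 : 0 < t ^ 2 := by positivity
  have st : s2 * t ^ 2 ≤ 1 := by nlinarith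
  have st2 : C0 * t ^ 3 ≤ s2 * t ^ 2 / 4 := by
    have : C0 * t ≤ s2 / 4 := by nlinarith
    nlinarith
  set q := Real.exp (-(s2 * t ^ 2 / 2)) with hq
  have hqe : |q - (1 - s2 * t ^ 2 / 2)| ≤ s2 ^ 2 * t ^ 3 := by
    have h := Real.abs_exp_sub_one_sub_id_le (x := -(s2 * t ^ 2 / 2)) (by
      rw [abs_neg, abs_of_nonneg (by positivity)]; linarith)
    have e : q - (1 - s2 * t ^ 2 / 2) = Real.exp (-(s2 * t ^ 2 / 2)) - 1 - -(s2 * t ^ 2 / 2) := by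
      rw [hq]; ring
    rw [e]
    refine h.trans ?_
    have : t ^ 4 ≤ t ^ 3 := pow_le_pow_of_le_one ht.le h2 (by norm_num)
    have : s2 ^ 2 * t ^ 4 ≤ s2 ^ 2 * t ^ 3 := mul_le_mul_of_nonneg_left this (by positivity)
    nlinarith [show 0 ≤ s2 ^ 2 * t ^ 3 by positivity]
  have hsg' : ∀ k, ‖(1 - (t : ℂ) ^ 2 / 2 * sg k) - ((1 - s2 * t ^ 2 / 2 : ℝ) : ℂ)‖ ≤
      C0 * (t ^ 2 * r ^ k) := by
    intro k
    have e : (1 - (t : ℂ) ^ 2 / 2 * sg k) - ((1 - s2 * t ^ 2 / 2 : ℝ) : ℂ) =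
        ((-(t ^ 2 / 2) * (sg k - s2) : ℝ) : ℂ) := by push_cast; ring
    rw [e, Complex.norm_real, Real.norm_eq_abs, abs_mul, abs_neg, abs_of_nonneg (by positivity)]
    have := mul_le_mul_of_nonneg_left (hsg k) (show 0 ≤ t ^ 2 / 2 by positivity)
    have p : 0 ≤ C0 * (t ^ 2 * r ^ k) := by positivity
    linarith
  have hl2 : ∀ k, ‖lm t k - ((1 - s2 * t ^ 2 / 2 : ℝ) : ℂ)‖ ≤ C0 * t ^ 3 + C0 * (t ^ 2 * r ^ k) := by
    intro k
    have := norm_add_le (lm t k - (1 - (t : ℂ) ^ 2 / 2 * sg k))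
      ((1 - (t : ℂ) ^ 2 / 2 * sg k) - ((1 - s2 * t ^ 2 / 2 : ℝ) : ℂ))
    rw [sub_add_sub_cancel] at this
    linarith [hlm t ht h1 k, hsg' k]
  have main := (prod_compare (lm := lm t) (q := q) (β := s2 * t ^ 2 / 4)
    (ε := fun k => (C0 + s2 ^ 2) * t ^ 3 + C0 * t ^ 2 * r ^ k) (δ := fun k => C0 * t ^ 2 * r ^ k)
    (Real.exp_pos _).le
    (Real.exp_le_exp.2 (by nlinarith)) ?_ (fun k => by positivity) ?_ n).2
  · refine main.trans ?_
    rw [Finset.sum_add_distrib, Finset.sum_const,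
      Finset.card_range, nsmul_eq_mul, ← Finset.mul_sum _ _ (C0 * t ^ 2)]
    have g := geom_sum_le' hr0 hr1 n
    have g1 : C0 * t ^ 2 * ∑ k ∈ Finset.range n, r ^ k ≤ C0 * t ^ 2 * (1 - r)⁻¹ :=
      mul_le_mul_of_nonneg_left g (by positivity)
    have g2 : C0 * t ^ 2 * (1 - r)⁻¹ ≤ C0 * (1 - r)⁻¹ := by
      have : t ^ 2 ≤ 1 := pow_le_one₀ ht.le h2
      have : 0 ≤ C0 * (1 - r)⁻¹ := by positivity
      nlinarith
    have x1 : Real.exp (s2 * t ^ 2 / 4 - s2 * t ^ 2 / 4 * n + C0 * t ^ 2 * ∑ k ∈ Finset.range n, r ^ k)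
        ≤ Real.exp (s2 + C0 * (1 - r)⁻¹) * Real.exp (-(s2 / 4) * (n * t ^ 2)) := by
      rw [← Real.exp_add]
      apply Real.exp_le_exp.2
      have : t ^ 2 ≤ 1 := pow_le_one₀ ht.le h2
      nlinarith
    have x2 : n * ((C0 + s2 ^ 2) * t ^ 3) + C0 * t ^ 2 * ∑ k ∈ Finset.range n, r ^ k ≤
        (C0 + s2 ^ 2) * (1 - r)⁻¹ * (n * t ^ 3 + t ^ 2) := by
      have y1 : (n : ℝ) * ((C0 + s2 ^ 2) * t ^ 3) * 1 ≤ n * ((C0 + s2 ^ 2) * t ^ 3) * (1 - r)⁻¹ :=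
        mul_le_mul_of_nonneg_left hri (by positivity)
      have y2 : 0 ≤ s2 ^ 2 * t ^ 2 * (1 - r)⁻¹ := by positivity
      nlinarith
    have := mul_le_mul x2 x1 (Real.exp_pos _).le (by positivity)
    refine this.trans (le_of_eq ?_)
    ring
  · intro k
    have := norm_add_le (lm t k - ((1 - s2 * t ^ 2 / 2 : ℝ) : ℂ))
      (((1 - s2 * t ^ 2 / 2 : ℝ) : ℂ) - q)
    rw [sub_add_sub_cancel, ← Complex.ofReal_sub, Complex.norm_real, Real.norm_eq_abs,
      abs_sub_comm] at this
    linarith [hl2 k]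
  · intro k
    have := norm_add_le (lm t k - ((1 - s2 * t ^ 2 / 2 : ℝ) : ℂ))
      (((1 - s2 * t ^ 2 / 2 : ℝ) : ℂ))
    rw [sub_add_cancel, Complex.norm_real, Real.norm_eq_abs, abs_of_nonneg (by linarith)] at this
    have h := Real.add_one_le_exp (-(s2 * t ^ 2 / 4) + C0 * t ^ 2 * r ^ k)
    linarith [hl2 k]

theorem gauss_cdf {s2 : ℝ} (hs : 0 < s2) (u : ℝ) :
    (ProbabilityTheory.gaussianReal 0 (NNReal.mk s2 hs.le)).real (Set.Iic u) =
      stdNormalCDF (u / Real.sqrt s2) := by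
  have hq : 0 < Real.sqrt s2 := Real.sqrt_pos.2 hs
  have h := ProbabilityTheory.gaussianReal_map_const_mul (μ := 0) (v := 1) (Real.sqrt s2)
  have e : ProbabilityTheory.gaussianReal 0 (NNReal.mk s2 hs.le) =
      (ProbabilityTheory.gaussianReal 0 1).map (fun x => Real.sqrt s2 * x) := by
    rw [h]
    congr 1
    · simp
    · ext; simp [Real.sq_sqrt hs.le]
  rw [e, map_measureReal_apply (by fun_prop) measurableSet_Iic]
  have e2 : (fun x => Real.sqrt s2 * x) ⁻¹' Set.Iic u = Set.Iic (u / Real.sqrt s2) := by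
    ext x
    simp only [Set.mem_preimage, Set.mem_Iic]
    rw [le_div_iff₀ hq, mul_comm]
  rw [e2, measureReal_def, ProbabilityTheory.gaussianReal_apply_eq_integral _ one_ne_zero,
    ENNReal.toReal_ofReal]
  · unfold stdNormalCDF
    rw [← integral_const_mul]
    simp [ProbabilityTheory.gaussianPDFReal]
  · exact integral_nonneg fun x => ProbabilityTheory.gaussianPDFReal_nonneg _ _ _

theorem gauss_lip {s2 : ℝ} (hs : 0 < s2) : ∃ m : ℝ, 0 ≤ m ∧ ∀ x y, x ≤ y →
    (ProbabilityTheory.gaussianReal 0 (NNReal.mk s2 hs.le)).real (Set.Iic y) -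
    (ProbabilityTheory.gaussianReal 0 (NNReal.mk s2 hs.le)).real (Set.Iic x) ≤ m * (y - x) := by
  set v : NNReal := NNReal.mk s2 hs.le with hv
  have hv0 : v ≠ 0 := by
    intro h
    have : (v : ℝ) = 0 := by rw [h]; rfl
    have h2 : (v : ℝ) = s2 := rfl
    linarith
  refine ⟨(Real.sqrt (2 * Real.pi * v))⁻¹, by positivity, ?_⟩
  intro x y hxy
  have i := ProbabilityTheory.integrable_gaussianPDFReal 0 v
  have e : ∀ u, (ProbabilityTheory.gaussianReal 0 v).real (Set.Iic u) =
      ∫ t in Set.Iic u, ProbabilityTheory.gaussianPDFReal 0 v t := by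
    intro u
    rw [measureReal_def, ProbabilityTheory.gaussianReal_apply_eq_integral _ hv0,
      ENNReal.toReal_ofReal]
    exact integral_nonneg fun x => ProbabilityTheory.gaussianPDFReal_nonneg _ _ _
  rw [e, e, intervalIntegral.integral_Iic_sub_Iic i.integrableOn i.integrableOn]
  have := intervalIntegral.norm_integral_le_of_norm_le_const (a := x) (b := y)
    (C := (Real.sqrt (2 * Real.pi * v))⁻¹) (f := ProbabilityTheory.gaussianPDFReal 0 v) ?_
  · rw [abs_of_nonneg (by linarith)] at this
    exact (le_abs_self _).trans this
  · intro t _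
    rw [Real.norm_eq_abs, abs_of_nonneg (ProbabilityTheory.gaussianPDFReal_nonneg _ _ _)]
    unfold ProbabilityTheory.gaussianPDFReal
    apply mul_le_of_le_one_right (by positivity)
    apply Real.exp_le_one_iff.2
    have : 0 ≤ (t - 0) ^ 2 / (2 * (v : ℝ)) := by positivity
    rw [neg_div]; linarith

theorem rate {s2 r C0 t0 : ℝ} (hs : 0 < s2) (hr0 : 0 < r) (hr1 : r < 1) (hC0 : 0 ≤ C0)
    (ht0 : 0 < t0) {lm : ℝ → ℕ → ℂ} {sg : ℕ → ℝ} (hsg : ∀ k, |sg k - s2| ≤ C0 * r ^ k)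
    (hlm : ∀ t, 0 < t → t ≤ t0 → ∀ k, ‖lm t k - (1 - (t : ℂ) ^ 2 / 2 * sg k)‖ ≤ C0 * t ^ 3)
    (μ : ℕ → Measure ℝ) [∀ n, IsProbabilityMeasure (μ n)]
    (hμ : ∀ n : ℕ, 1 ≤ n → ∀ t, 0 < t → t ≤ t0 →
      charFun (μ n) (t * Real.sqrt n) = ∏ k ∈ Finset.range n, lm t k) :
    ∃ C : ℝ, 0 < C ∧ ∀ n : ℕ, 1 ≤ n → ∀ u : ℝ,
      |(μ n).real (Set.Iic u) - stdNormalCDF (u / Real.sqrt s2)| ≤ C / Real.sqrt n := by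
  obtain ⟨t1, C1, ht1, ht10, hC1, hmain⟩ := prod_gauss hs hr0 hr1 hC0 ht0 hsg hlm
  obtain ⟨m, hm, hlip⟩ := gauss_lip hs
  obtain ⟨K, hK, hess⟩ := esseen
  set c := s2 / 4 with hc
  have hc0 : 0 < c := by positivity
  set g : ℝ → ℝ := fun t => (t ^ 2 + t) * Real.exp (-c * t ^ 2) with hg
  have gi : Integrable g := by
    have i1 := integrable_rpow_mul_exp_neg_mul_sq hc0 (s := 2) (by norm_num)
    have i2 := integrable_rpow_mul_exp_neg_mul_sq hc0 (s := 1) (by norm_num)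
    refine (i1.add i2).congr (Filter.Eventually.of_forall fun t => ?_)
    simp only [hg, Pi.add_apply, Real.rpow_one, Real.rpow_two]
    ring
  set M := ∫ t in Set.Ioi (0 : ℝ), g t with hM
  have M0 : 0 ≤ M := setIntegral_nonneg measurableSet_Ioi fun t ht => by
    have : (0 : ℝ) < t := ht
    simp only [hg]; positivity
  refine ⟨K * (C1 * M + m / t1) + 1, by positivity, ?_⟩
  intro n hn u
  have hn0 : (0 : ℝ) < n := by exact_mod_cast hn
  have hn1 : (1 : ℝ) ≤ n := by exact_mod_cast hn
  have hsn : 0 < Real.sqrt n := Real.sqrt_pos.2 hn0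
  have hsn1 : 1 ≤ Real.sqrt n := Real.one_le_sqrt.2 hn1
  have hsq : Real.sqrt n ^ 2 = n := Real.sq_sqrt hn0.le
  rw [← gauss_cdf hs]
  have := hess (μ n) (ProbabilityTheory.gaussianReal 0 (NNReal.mk s2 hs.le)) m (t1 * Real.sqrt n)
    (fun t => C1 / Real.sqrt n * g t) hm (by positivity) hlip (by fun_prop) ?_ ?_ u
  · refine this.trans ?_
    rw [intervalIntegral.integral_const_mul]
    have b : ∫ t in (0 : ℝ)..(t1 * Real.sqrt n), g t ≤ M := by
      rw [intervalIntegral.integral_of_le (by positivity)]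
      refine setIntegral_mono_set gi.integrableOn ?_ ?_
      · rw [Filter.EventuallyLE, ae_restrict_iff' measurableSet_Ioi]
        refine Filter.Eventually.of_forall fun t ht => ?_
        have : (0 : ℝ) < t := ht
        simp only [hg, Pi.zero_apply]; positivity
      · exact Filter.Eventually.of_forall fun t ht => ht.1
    have b2 := mul_le_mul_of_nonneg_left b (show 0 ≤ C1 / Real.sqrt n by positivity)
    have e : m / (t1 * Real.sqrt n) = m / t1 / Real.sqrt n := by rw [div_div]
    rw [e, le_div_iff₀ hsn]
    have b3 : (C1 / Real.sqrt n * ∫ t in (0 : ℝ)..(t1 * Real.sqrt n), g t) + m / t1 / Real.sqrt n ≤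
        (C1 * M + m / t1) / Real.sqrt n := by
      rw [add_div]
      have : C1 / Real.sqrt n * M = C1 * M / Real.sqrt n := by ring
      linarith
    have b4 := mul_le_mul_of_nonneg_left b3 hK.le
    have b5 := mul_le_mul_of_nonneg_right b4 hsn.le
    have b6 : K * ((C1 * M + m / t1) / Real.sqrt n) * Real.sqrt n = K * (C1 * M + m / t1) := by
      field_simp
    linarith
  · intro t ht
    simp only [hg]; positivity
  · intro t ht htT
    set τ := t / Real.sqrt n with hτ
    have hτ0 : 0 < τ := by positivity
    have htτ : t = τ * Real.sqrt n := by rw [hτ]; field_simp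
    have hτ1 : τ ≤ t1 := by rw [hτ, div_le_iff₀ hsn]; exact htT
    have h := hmain τ hτ0 hτ1 n
    have h2 := hμ n hn τ hτ0 (hτ1.trans ht10)
    rw [← htτ] at h2
    rw [h2, ProbabilityTheory.charFun_gaussianReal]
    have e1 : (Real.exp (-(s2 * τ ^ 2 / 2)) : ℂ) ^ n =
        Complex.exp (t * (0 : ℝ) * Complex.I - ((NNReal.mk s2 hs.le : NNReal) : ℝ) * t ^ 2 / 2) := by
      have : -(s2 * τ ^ 2 / 2) * n = -(s2 * t ^ 2 / 2) := by
        rw [htτ, mul_pow, hsq]; ring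
      rw [← Complex.ofReal_pow, ← Real.exp_nat_mul, mul_comm (n : ℝ), this, Complex.ofReal_exp]
      congr 1
      push_cast
      simp
    rw [e1] at h
    refine h.trans ?_
    have e2 : (n : ℝ) * τ ^ 2 = t ^ 2 := by rw [htτ, mul_pow, hsq]; ring
    have e3 : (n : ℝ) * τ ^ 3 = t ^ 3 / Real.sqrt n := by
      have : (n : ℝ) * τ ^ 3 = n * τ ^ 2 * τ := by ring
      rw [this, e2, hτ]; ring
    have e4 : τ ^ 2 ≤ t ^ 2 / Real.sqrt n := by
      rw [hτ, div_pow, hsq]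
      apply div_le_div_of_nonneg_left (by positivity) hsn
      nlinarith
    rw [e2, e3]
    have e5 : t * (C1 / Real.sqrt n * g t) =
        C1 * (t ^ 3 / Real.sqrt n + t ^ 2 / Real.sqrt n) * Real.exp (-c * t ^ 2) := by
      simp only [hg]; ring
    rw [e5]
    gcongr

end Rate

/-! ### From the spectral data to the limit theorem -/
section Dynamics

variable {X : Type*} [TopologicalSpace X] {L : (X →ᵇ ℂ) →ₗ[ℂ] (X →ᵇ ℂ)}
    {N : (X →ᵇ ℂ) →ₗ[ℂ] ℂ} {db : X → X → ℝ} {r : ℝ}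

/-- Multiplicative cocycle. -/
def mcoc (σ : C(X, X)) (e : X →ᵇ ℂ) : ℕ → (X →ᵇ ℂ)
  | 0 => 1
  | n + 1 => e * (mcoc σ e n).compContinuous σ

/-- Additive cocycle. -/
def acoc (σ : C(X, X)) (ξ : X →ᵇ ℂ) : ℕ → (X →ᵇ ℂ)
  | 0 => 0
  | n + 1 => ξ + (acoc σ ξ n).compContinuous σ

theorem N_comp (H : GapData L N db r) {σ : C(X, X)}
    (hLσ : ∀ φ ψ : X →ᵇ ℂ, L (φ * ψ.compContinuous σ) = ψ * L φ) (φ ψ : X →ᵇ ℂ) :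
    N (φ * ψ.compContinuous σ) = N (ψ * L φ) := by
  rw [← H.NL, hLσ]

theorem N_mcoc (H : GapData L N db r) {σ : C(X, X)}
    (hLσ : ∀ φ ψ : X →ᵇ ℂ, L (φ * ψ.compContinuous σ) = ψ * L φ) (e : X →ᵇ ℂ) (n : ℕ) :
    ∀ φ, N (mcoc σ e n * φ) = N ((fun φ => L (e * φ))^[n] φ) := by
  induction n with
  | zero => intro φ; simp [mcoc]
  | succ n ih =>
    intro φ
    rw [Function.iterate_succ_apply, ← ih, mcoc]
    have : e * (mcoc σ e n).compContinuous σ * φ = (e * φ) * (mcoc σ e n).compContinuous σ := by ring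
    rw [this, N_comp H hLσ]

theorem N_mcoc_eq (H : GapData L N db r) {σ : C(X, X)}
    (hLσ : ∀ φ ψ : X →ᵇ ℂ, L (φ * ψ.compContinuous σ) = ψ * L φ) (e : X →ᵇ ℂ)
    (hne : ∀ n, lam L N e n ≠ 0) (hw : ∀ n, N (wseq L N e n) = 0) (n : ℕ) :
    N (mcoc σ e n) = ∏ k ∈ Finset.range n, lam L N e k := by
  have := N_mcoc H hLσ e n 1
  rw [mul_one] at this
  rw [this, iterate_eq hne, map_smul, map_add, H.N1, hw]
  simp

theorem gseq_eq (ξ : X →ᵇ ℂ) (n : ℕ) :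
    gseq L ξ n = ∑ k ∈ Finset.range n, L^[k] (L ξ) := by
  induction n with
  | zero => simp [gseq]
  | succ n ih =>
    rw [gseq, Finset.sum_range_succ', map_add, ih, map_sum]
    simp only [Function.iterate_succ_apply', Function.iterate_zero, id]

theorem N_acoc (H : GapData L N db r) {σ : C(X, X)}
    (hLσ : ∀ φ ψ : X →ᵇ ℂ, L (φ * ψ.compContinuous σ) = ψ * L φ) (ξ : X →ᵇ ℂ) (n : ℕ) :
    ∀ ψ, N (acoc σ ξ n * ψ) = N (ξ * ∑ k ∈ Finset.range n, L^[k] ψ) := by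
  induction n with
  | zero => intro ψ; simp [acoc]
  | succ n ih =>
    intro ψ
    have : acoc σ ξ (n + 1) * ψ = ξ * ψ + ψ * (acoc σ ξ n).compContinuous σ := by
      rw [acoc]; ring
    rw [this, map_add, N_comp H hLσ, ih, Finset.sum_range_succ', mul_add, map_add, add_comm]
    simp only [Function.iterate_succ_apply, Function.iterate_zero, id]

theorem N_var (H : GapData L N db r) {σ : C(X, X)}
    (hLσ : ∀ φ ψ : X →ᵇ ℂ, L (φ * ψ.compContinuous σ) = ψ * L φ) (ξ : X →ᵇ ℂ) (n : ℕ) :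
    N (acoc σ ξ (n + 1) * acoc σ ξ (n + 1)) - N (acoc σ ξ n * acoc σ ξ n) =
      N (ξ * ξ) + 2 * N (ξ * gseq L ξ n) := by
  have e : acoc σ ξ (n + 1) * acoc σ ξ (n + 1) = ξ * ξ + (ξ * (acoc σ ξ n).compContinuous σ +
      ξ * (acoc σ ξ n).compContinuous σ) +
      1 * (acoc σ ξ n * acoc σ ξ n).compContinuous σ := by
    have : (acoc σ ξ n * acoc σ ξ n).compContinuous σ =
      (acoc σ ξ n).compContinuous σ * (acoc σ ξ n).compContinuous σ := rfl
    rw [acoc, this]; ring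
  rw [e, map_add, map_add, map_add, N_comp H hLσ, N_comp H hLσ, N_acoc H hLσ, H.L1, mul_one, gseq_eq]
  ring

variable [MeasurableSpace X] [BorelSpace X]

theorem main_abstract (H : GapData L N db r) {σ : C(X, X)}
    (hLσ : ∀ φ ψ : X →ᵇ ℂ, L (φ * ψ.compContinuous σ) = ψ * L φ)
    (ν : Measure X) [IsProbabilityMeasure ν] (hN : ∀ φ : X →ᵇ ℂ, N φ = ∫ x, φ x ∂ν)
    {ξr : X → ℝ} (hc : Continuous ξr) {K : ℝ} (hK : 1 ≤ K) (hn : ∀ x, |ξr x| ≤ K)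
    (hl : ∀ x y, |ξr x - ξr y| ≤ K * db x y) (hmean : ∫ x, ξr x ∂ν = 0)
    {S : ℕ → X → ℝ} (hS0 : ∀ x, S 0 x = 0) (hS : ∀ n x, S (n + 1) x = ξr x + S n (σ x)) :
    ∃ s2 : ℝ, 0 ≤ s2 ∧
      Tendsto (fun n : ℕ => (1 / (n : ℝ)) * ∫ x, (S n x) ^ 2 ∂ν) atTop (nhds s2) ∧
      (0 < s2 → ∃ C : ℝ, 0 < C ∧ ∀ n : ℕ, 1 ≤ n → ∀ u : ℝ,
        |(ν {x | S n x ≤ u * Real.sqrt n}).toReal - stdNormalCDF (u / Real.sqrt s2)|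
          ≤ C / Real.sqrt n) := by
  have r0 := H.r0
  have r1 := H.r1
  have K0 : 0 ≤ K := by linarith
  set ξ : X →ᵇ ℂ := BoundedContinuousFunction.ofNormedAddCommGroup (fun x => (ξr x : ℂ))
    (by fun_prop) K (fun x => by rw [Complex.norm_real]; exact hn x) with hξd
  have hξr : ∀ x, ξ x = ξr x := fun x => rfl
  have hξn : ‖ξ‖ ≤ K := by
    rw [BoundedContinuousFunction.norm_le K0]
    intro x
    rw [hξr, Complex.norm_real]; exact hn x
  have hξl : LipD db K ξ := by
    intro x y
    rw [hξr, hξr, ← Complex.ofReal_sub, Complex.norm_real]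
    exact hl x y
  have hξ0 : N ξ = 0 := by
    rw [hN]
    simp only [hξr]
    rw [integral_complex_ofReal, hmean]; simp
  have hac : ∀ n x, acoc σ ξ n x = S n x := by
    intro n
    induction n with
    | zero => intro x; rw [acoc, hS0, bcf_zero_apply]; simp
    | succ n ih =>
      intro x
      rw [acoc, BoundedContinuousFunction.add_apply, BoundedContinuousFunction.compContinuous_apply,
        ih, hξr, hS]
      push_cast; rfl
  have hSc : ∀ n, Continuous (S n) := by
    intro n
    have : S n = fun x => (acoc σ ξ n x).re := by
      ext x; rw [hac]; simp
    rw [this]; fun_prop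
  have hV : ∀ n, N (acoc σ ξ n * acoc σ ξ n) = ((∫ x, (S n x) ^ 2 ∂ν : ℝ) : ℂ) := by
    intro n
    rw [hN, ← integral_complex_ofReal]
    congr 1
    ext x
    rw [BoundedContinuousFunction.mul_apply, hac]
    push_cast; ring
  set V : ℕ → ℝ := fun n => ∫ x, (S n x) ^ 2 ∂ν with hVd
  have V0 : V 0 = 0 := by simp [hVd, hS0]
  set sg : ℕ → ℝ := fun n => V (n + 1) - V n with hsgd
  have hsgN : ∀ n, (sg n : ℂ) = N (ξ * ξ) + 2 * N (ξ * gseq L ξ n) := by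
    intro n
    rw [← N_var H hLσ, hV, hV, ← Complex.ofReal_sub]
  have hstep : ∀ n, dist (sg n) (sg (n + 1)) ≤ 2 * K ^ 2 * r * r ^ n := by
    intro n
    rw [dist_comm, Real.dist_eq, ← Real.norm_eq_abs, ← Complex.norm_real, Complex.ofReal_sub, hsgN, hsgN]
    have e : N (ξ * ξ) + 2 * N (ξ * gseq L ξ (n + 1)) - (N (ξ * ξ) + 2 * N (ξ * gseq L ξ n)) =
      2 * (N (ξ * gseq L ξ (n + 1)) - N (ξ * gseq L ξ n)) := by ring
    rw [e, norm_mul]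
    have := gseq_dist H K0 hξl hξn hξ0 n
    rw [Complex.norm_ofNat]
    refine (mul_le_mul_of_nonneg_left this zero_le_two).trans (le_of_eq ?_)
    ring
  obtain ⟨s2, hs2⟩ := cauchySeq_tendsto_of_complete (cauchySeq_of_le_geometric r _ r1 hstep)
  have hsg : ∀ k, |sg k - s2| ≤ 2 * K ^ 2 * r / (1 - r) * r ^ k := by
    intro k
    have := dist_le_of_le_geometric_of_tendsto r _ r1 hstep hs2 k
    rw [Real.dist_eq] at this
    refine this.trans (le_of_eq ?_)
    ring
  have hVs : ∀ n, ∑ k ∈ Finset.range n, sg k = V n := by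
    intro n
    rw [Finset.sum_range_sub, V0, sub_zero]
  have hT : Tendsto (fun n : ℕ => (1 / (n : ℝ)) * V n) atTop (nhds s2) := by
    have := hs2.cesaro
    refine this.congr fun n => ?_
    rw [hVs, one_div]
  refine ⟨s2, ge_of_tendsto' hT fun n => ?_, hT, ?_⟩
  · have : 0 ≤ V n := integral_nonneg fun x => sq_nonneg _
    positivity
  intro hs2p
  set E : ℝ → (X →ᵇ ℂ) := fun t => BoundedContinuousFunction.ofNormedAddCommGroup
    (fun x => Complex.exp (Complex.I * (t * ξr x : ℝ)))
    (by fun_prop) 1 (fun x => by rw [mul_comm, Complex.norm_exp_ofReal_mul_I]) with hE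
  have hEx : ∀ t x, E t x = Complex.exp (Complex.I * (t * ξr x : ℝ)) := fun t x => rfl
  have hmc : ∀ t n x, mcoc σ (E t) n x = Complex.exp (t * S n x * Complex.I) := by
    intro t n
    induction n with
    | zero => intro x; rw [mcoc, hS0, bcf_one_apply]; simp
    | succ n ih =>
      intro x
      rw [mcoc, BoundedContinuousFunction.mul_apply, BoundedContinuousFunction.compContinuous_apply,
        ih, hEx, hS, ← Complex.exp_add]
      congr 1
      push_cast; ring
  set r' := (1 + r) / 2 with hr'
  have hr'1 : r' < 1 := by rw [hr']; linarith
  set A := 3 * K / (1 - r') with hA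
  set B := (3 * K ^ 2 + 2 * K * A + 4 * K * (A + 3 * K)) / (1 - r) with hB
  have q1 : 0 < 1 - r' := by linarith
  have q2 : 0 < 1 - r := by linarith
  have A0 : 0 < A := by positivity
  have B0 : 0 < B := by positivity
  set t0 := min ((1 - r) / (8 * K)) (min (1 / A) (1 / (4 * K))) with ht0
  have hP : ∀ t, 0 < t → t ≤ t0 → ∀ n, lam L N (E t) n ≠ 0 ∧ N (wseq L N (E t) n) = 0 ∧
    ‖lam L N (E t) n - (1 - (t : ℂ) ^ 2 / 2 * (N (ξ * ξ) + 2 * N (ξ * gseq L ξ n)))‖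
      ≤ (K ^ 3 + K ^ 2 * A + K * B) * t ^ 3 := by
    intro t ht htt n
    simp only [ht0, le_min_iff] at htt
    obtain ⟨h1, h2, h3⟩ := htt
    rw [le_div_iff₀ (by positivity)] at h1 h2 h3
    have hτ : |t| = t := abs_of_pos ht
    obtain ⟨e1, e2, e3, e4, e5⟩ := e_estimates (db := db) hτ K0 hξr (hEx t) hn hl (by nlinarith)
    refine perturb H hτ hK e1 e2 e3 e4 e5 hξn hξ0 (r' := r') (A := A) (B := B) ?_ hr'1 ?_ ?_ ?_ ?_ n
    · rw [hr']; nlinarith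
    · rw [hA]; field_simp
    · rw [hB]; field_simp
    · linarith
    · linarith
  have hpm : ∀ n, IsProbabilityMeasure (ν.map fun x => S n x / Real.sqrt n) := fun n =>
    Measure.isProbabilityMeasure_map ((hSc n).div_const _).measurable.aemeasurable
  obtain ⟨C, hC, hfin⟩ := rate (s2 := s2) (r := r)
    (C0 := (K ^ 3 + K ^ 2 * A + K * B) + 2 * K ^ 2 * r / (1 - r)) (t0 := t0)
    (lm := fun t n => lam L N (E t) n) (sg := sg) hs2p r0 r1 (by positivity) (by positivity)
    (fun k => (hsg k).trans (mul_le_mul_of_nonneg_right (by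
      have : 0 ≤ K ^ 3 + K ^ 2 * A + K * B := by positivity
      linarith) (by positivity)))
    (fun t ht htt k => by
      have := (hP t ht htt k).2.2
      rw [← hsgN] at this
      refine this.trans (mul_le_mul_of_nonneg_right ?_ (by positivity))
      have : 0 ≤ 2 * K ^ 2 * r / (1 - r) := by positivity
      linarith)
    (fun n => ν.map fun x => S n x / Real.sqrt n)
    (fun n hn1 t ht htt => by
      have hsn : Real.sqrt n ≠ 0 := by
        have : (0 : ℝ) < n := by exact_mod_cast hn1
        exact (Real.sqrt_pos.2 this).ne'
      rw [← N_mcoc_eq H hLσ (E t) (fun k => (hP t ht htt k).1) (fun k => (hP t ht htt k).2.1) n, hN,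
        charFun_apply_real, integral_map ((hSc n).div_const _).measurable.aemeasurable
          (by fun_prop)]
      congr 1
      ext x
      rw [hmc, ← Complex.ofReal_mul, ← Complex.ofReal_mul]
      congr 3
      field_simp)
  refine ⟨C, hC, fun n hn1 u => ?_⟩
  have := hfin n hn1 u
  have hsn : 0 < Real.sqrt n := by
    have : (0 : ℝ) < n := by exact_mod_cast hn1
    exact Real.sqrt_pos.2 this
  rw [map_measureReal_apply ((hSc n).div_const _).measurable measurableSet_Iic] at this
  have e : (fun x => S n x / Real.sqrt n) ⁻¹' Set.Iic u = {x | S n x ≤ u * Real.sqrt n} := by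
    ext x
    simp only [Set.mem_preimage, Set.mem_Iic, Set.mem_ofPred_eq]
    rw [div_le_iff₀ hsn]
  rw [e] at this
  exact this

end Dynamics

/-! ### The concrete transfer operator -/
section RealIneq

theorem concave_ineq {B th u : ℝ} (hB : 0 < B) (h0 : 0 < th) (h1 : th < 1) (hu0 : 0 ≤ u)
    (hu1 : u ≤ 1) :
    1 - Real.exp (-(th * B * u)) ≤
      (1 - Real.exp (-(th * B))) / (1 - Real.exp (-B)) * (1 - Real.exp (-(B * u))) := by
  have hb : Real.exp (-B) < 1 := by rw [Real.exp_lt_one_iff]; linarith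
  have hb' : 0 < 1 - Real.exp (-B) := by linarith
  set q := Real.exp (-(B * u)) with hq
  have hq1 : q ≤ 1 := by rw [hq, Real.exp_le_one_iff]; have := mul_nonneg hB.le hu0; linarith
  have hqB : Real.exp (-B) ≤ q := by rw [hq]; apply Real.exp_le_exp.2; nlinarith
  have hc := Real.concaveOn_rpow h0.le h1.le
  set s := (1 - q) / (1 - Real.exp (-B)) with hs
  have s0 : 0 ≤ s := div_nonneg (by linarith) hb'.le
  have s1 : s ≤ 1 := by rw [hs, div_le_one hb']; linarith
  have h := hc.2 (show (1 : ℝ) ∈ Set.Ici 0 by simp)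
    (show Real.exp (-B) ∈ Set.Ici 0 from (Real.exp_pos _).le)
    (show 0 ≤ 1 - s by linarith) s0 (by ring)
  simp only [smul_eq_mul, mul_one, Real.one_rpow] at h
  have e1 : 1 - s + s * Real.exp (-B) = q := by
    have : s * (1 - Real.exp (-B)) = 1 - q := by rw [hs]; field_simp
    linarith
  rw [e1, hq, ← Real.exp_mul, ← Real.exp_mul] at h
  have e2 : -B * th = -(th * B) := by ring
  have e3 : -(B * u) * th = -(th * B * u) := by ring
  rw [e2, e3] at h
  have e4 : (1 - Real.exp (-(th * B))) / (1 - Real.exp (-B)) * (1 - q) =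
      s * (1 - Real.exp (-(th * B))) := by rw [hs]; ring
  rw [e4]
  linarith

theorem convex_ineq {B u : ℝ} (hu0 : 0 ≤ u) (hu1 : u ≤ 1) :
    (1 - Real.exp (-B)) * u ≤ 1 - Real.exp (-(B * u)) := by
  have h := convexOn_exp.2 (Set.mem_univ 0) (Set.mem_univ (-B))
    (show 0 ≤ 1 - u by linarith) hu0 (by ring)
  simp only [smul_eq_mul, mul_zero, Real.exp_zero, zero_add] at h
  have e : u * -B = -(B * u) := by ring
  rw [e] at h
  linarith

end RealIneq

section Coupling

theorem coupling {E : Type*} [MeasurableSpace E] (p : Measure E) [IsProbabilityMeasure p]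
    {g1 g2 : E → ℝ} {φ1 φ2 : E → ℂ} {κ δ c : ℝ}
    (i1 : Integrable g1 p) (i2 : Integrable g2 p)
    (j11 : Integrable (fun a => (g1 a : ℂ) * φ1 a) p)
    (j12 : Integrable (fun a => (g1 a : ℂ) * φ2 a) p)
    (j22 : Integrable (fun a => (g2 a : ℂ) * φ2 a) p)
    (m1 : ∫ a, g1 a ∂p = 1) (m2 : ∫ a, g2 a ∂p = 1) (p1 : ∀ a, 0 ≤ g1 a)
    (hκ : 0 ≤ κ) (h12 : ∀ a, κ * g1 a ≤ g2 a) (hδ : ∀ a, ‖φ1 a - φ2 a‖ ≤ δ)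
    (hc : ∀ a b, ‖φ1 a - φ2 b‖ ≤ c) :
    ‖∫ a, (g1 a : ℂ) * φ1 a ∂p - ∫ a, (g2 a : ℂ) * φ2 a ∂p‖ ≤ κ * δ + (1 - κ) * c := by
  set A := ∫ a, (g1 a : ℂ) * φ1 a ∂p with hA
  have hg1C : ∫ a, (g1 a : ℂ) ∂p = 1 := by rw [integral_complex_ofReal, m1]; simp
  have hg2C : ∫ a, (g2 a : ℂ) ∂p = 1 := by rw [integral_complex_ofReal, m2]; simp
  have hAb : ∀ b, ‖A - φ2 b‖ ≤ c := by
    intro b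
    have e : A - φ2 b = ∫ a, (g1 a : ℂ) * (φ1 a - φ2 b) ∂p := by
      simp_rw [mul_sub]
      have k1 : Integrable (fun a => (g1 a : ℂ) * φ2 b) p := i1.ofReal.mul_const _
      rw [integral_sub j11 k1, integral_mul_const, hg1C, one_mul]
    rw [e]
    have := norm_integral_le_of_norm_le (f := fun a => (g1 a : ℂ) * (φ1 a - φ2 b))
      (g := fun a => g1 a * c) (μ := p) (i1.mul_const c)
      (Filter.Eventually.of_forall fun a => by
        rw [norm_mul, Complex.norm_real, Real.norm_eq_abs, abs_of_nonneg (p1 a)]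
        exact mul_le_mul_of_nonneg_left (hc a b) (p1 a))
    rwa [integral_mul_const, m1, one_mul] at this
  have hj : Integrable (fun a => (g1 a : ℂ) * (φ1 a - φ2 a)) p := by
    simp_rw [mul_sub]; exact j11.sub j12
  have t1 : ‖∫ a, (g1 a : ℂ) * (φ1 a - φ2 a) ∂p‖ ≤ δ := by
    have := norm_integral_le_of_norm_le (f := fun a => (g1 a : ℂ) * (φ1 a - φ2 a))
      (g := fun a => g1 a * δ) (μ := p) (i1.mul_const δ)
      (Filter.Eventually.of_forall fun a => by
        rw [norm_mul, Complex.norm_real, Real.norm_eq_abs, abs_of_nonneg (p1 a)]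
        exact mul_le_mul_of_nonneg_left (hδ a) (p1 a))
    rwa [integral_mul_const, m1, one_mul] at this
  have t2 : ‖∫ a, ((g2 a - κ * g1 a : ℝ) : ℂ) * (A - φ2 a) ∂p‖ ≤ (1 - κ) * c := by
    have := norm_integral_le_of_norm_le (f := fun a => ((g2 a - κ * g1 a : ℝ) : ℂ) * (A - φ2 a))
      (g := fun a => (g2 a - κ * g1 a) * c) (μ := p) ((i2.sub (i1.const_mul κ)).mul_const c)
      (Filter.Eventually.of_forall fun a => by
        rw [norm_mul, Complex.norm_real, Real.norm_eq_abs, abs_of_nonneg (by linarith [h12 a])]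
        exact mul_le_mul_of_nonneg_left (hAb a) (by linarith [h12 a]))
    rwa [integral_mul_const, integral_sub i2 (i1.const_mul κ), integral_const_mul, m1, m2,
      mul_one] at this
  have e1 : ∫ a, (g1 a : ℂ) * (φ1 a - φ2 a) ∂p = A - ∫ a, (g1 a : ℂ) * φ2 a ∂p := by
    simp_rw [mul_sub]
    rw [integral_sub j11 j12]
  have e2 : ∫ a, ((g2 a - κ * g1 a : ℝ) : ℂ) * (A - φ2 a) ∂p =
      A - κ * A - (∫ a, (g2 a : ℂ) * φ2 a ∂p - κ * ∫ a, (g1 a : ℂ) * φ2 a ∂p) := by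
    have : ∀ a, ((g2 a - κ * g1 a : ℝ) : ℂ) * (A - φ2 a) =
        ((g2 a : ℂ) * A - κ * ((g1 a : ℂ) * A)) -
        ((g2 a : ℂ) * φ2 a - κ * ((g1 a : ℂ) * φ2 a)) := by
      intro a; push_cast; ring
    simp_rw [this]
    have k1 : Integrable (fun a => (g1 a : ℂ) * A) p := i1.ofReal.mul_const A
    have k2 : Integrable (fun a => (g2 a : ℂ) * A) p := i2.ofReal.mul_const A
    have k3 : Integrable (fun a => (g2 a : ℂ) * A - κ * ((g1 a : ℂ) * A)) p :=
      k2.sub (k1.const_mul _)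
    have k4 : Integrable (fun a => (g2 a : ℂ) * φ2 a - κ * ((g1 a : ℂ) * φ2 a)) p :=
      j22.sub (j12.const_mul _)
    rw [integral_sub k3 k4, integral_sub k2 (k1.const_mul _), integral_sub j22 (j12.const_mul _),
      integral_const_mul, integral_const_mul, integral_mul_const, integral_mul_const, hg1C, hg2C]
    ring
  have e3 : A - ∫ a, (g2 a : ℂ) * φ2 a ∂p = κ * ∫ a, (g1 a : ℂ) * (φ1 a - φ2 a) ∂p +
      ∫ a, ((g2 a - κ * g1 a : ℝ) : ℂ) * (A - φ2 a) ∂p := by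
    rw [e1, e2]; ring
  rw [e3]
  refine (norm_add_le _ _).trans ?_
  rw [norm_mul, Complex.norm_real, Real.norm_eq_abs, abs_of_nonneg hκ]
  have := mul_le_mul_of_nonneg_left t1 hκ
  linarith

end Coupling

section Concrete

variable {E : Type*} [MetricSpace E]

theorem dX_summable (x y : ℕ → E) :
    Summable fun n : ℕ => ((1 : ℝ) / 2) ^ (n + 1) * min (dist (x n) (y n)) 1 := by
  have h : Summable fun n : ℕ => ((1 : ℝ) / 2) ^ (n + 1) :=
    (summable_nat_add_iff 1).2 summable_geometric_two
  refine Summable.of_nonneg_of_le (fun n => by positivity) (fun n => ?_) h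
  exact mul_le_of_le_one_right (by positivity) (min_le_right _ _)

theorem dX_nonneg (x y : ℕ → E) : 0 ≤ dX x y := tsum_nonneg fun n => by positivity

theorem dX_le_one (x y : ℕ → E) : dX x y ≤ 1 := by
  have h : HasSum (fun n : ℕ => ((1 : ℝ) / 2) ^ (n + 1)) 1 := by
    have := hasSum_geometric_two.mul_left (1 / 2)
    simp only [pow_succ']
    simpa using this
  refine ((dX_summable x y).tsum_le_tsum (fun n => ?_) h.summable).trans_eq h.tsum_eq
  exact mul_le_of_le_one_right (by positivity) (min_le_right _ _)

theorem dX_cons (a : E) (x y : ℕ → E) : dX (cons a x) (cons a y) = dX x y / 2 := by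
  unfold dX
  rw [(dX_summable (cons a x) (cons a y)).tsum_eq_zero_add]
  have e0 : cons a x 0 = cons a y 0 := rfl
  have e1 : ∀ (x : ℕ → E) n, cons a x (n + 1) = x n := fun x n => rfl
  simp only [e0, e1, dist_self]
  rw [min_eq_left zero_le_one, mul_zero, zero_add, ← tsum_div_const]
  congr 1
  ext n
  ring

theorem continuous_cons_left (x : ℕ → E) : Continuous fun a : E => cons a x := by
  refine continuous_pi fun n => ?_
  cases n with
  | zero => exact continuous_id
  | succ n => exact continuous_const

theorem continuous_cons_right (a : E) : Continuous fun x : ℕ → E => cons a x := by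
  refine continuous_pi fun n => ?_
  cases n with
  | zero => exact continuous_const
  | succ n => exact continuous_apply n

theorem shift_cons (a : E) (x : ℕ → E) : shift (cons a x) = x := rfl

variable [MeasurableSpace E] [BorelSpace E]

theorem int_g (p : Measure E) [IsProbabilityMeasure p] {f : (ℕ → E) → ℝ} (hc : Continuous f)
    {M : ℝ} (hM : ∀ x, |f x| ≤ M) (x : ℕ → E) :
    Integrable (fun a => Real.exp (f (cons a x))) p := by
  refine Integrable.of_bound (C := Real.exp M) ?_ (Filter.Eventually.of_forall fun a => ?_)
  · exact (Real.continuous_exp.comp (hc.comp (continuous_cons_left x))).aestronglyMeasurable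
  · rw [Real.norm_eq_abs, Real.abs_exp]
    exact Real.exp_le_exp.2 ((le_abs_self _).trans (hM _))

theorem int_gφ (p : Measure E) [IsProbabilityMeasure p] {f : (ℕ → E) → ℝ} (hc : Continuous f)
    {M : ℝ} (hM : ∀ x, |f x| ≤ M) (φ : (ℕ → E) →ᵇ ℂ) (x y : ℕ → E) :
    Integrable (fun a => (Real.exp (f (cons a x)) : ℂ) * φ (cons a y)) p := by
  refine Integrable.of_bound (C := Real.exp M * ‖φ‖) ?_ (Filter.Eventually.of_forall fun a => ?_)
  · refine Continuous.aestronglyMeasurable ?_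
    exact (Complex.continuous_ofReal.comp
      (Real.continuous_exp.comp (hc.comp (continuous_cons_left x)))).mul
      (φ.continuous.comp (continuous_cons_left y))
  · rw [norm_mul, Complex.norm_real, Real.norm_eq_abs, Real.abs_exp]
    exact mul_le_mul (Real.exp_le_exp.2 ((le_abs_self _).trans (hM _))) (φ.norm_coe_le_norm _)
      (norm_nonneg _) (Real.exp_pos _).le

/-- The transfer operator on complex bounded continuous functions. -/
def Lop (p : Measure E) [IsProbabilityMeasure p] (f : (ℕ → E) → ℝ) (hc : Continuous f)
    (M : ℝ) (hM : ∀ x, |f x| ≤ M) : ((ℕ → E) →ᵇ ℂ) →ₗ[ℂ] ((ℕ → E) →ᵇ ℂ) where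
  toFun φ := BoundedContinuousFunction.ofNormedAddCommGroup
    (fun x => ∫ a, (Real.exp (f (cons a x)) : ℂ) * φ (cons a x) ∂p)
    (by
      refine continuous_of_dominated (bound := fun _ => Real.exp M * ‖φ‖)
        (fun x => (int_gφ p hc hM φ x x).aestronglyMeasurable)
        (fun x => Filter.Eventually.of_forall fun a => ?_) (integrable_const _)
        (Filter.Eventually.of_forall fun a => ?_)
      · rw [norm_mul, Complex.norm_real, Real.norm_eq_abs, Real.abs_exp]
        exact mul_le_mul (Real.exp_le_exp.2 ((le_abs_self _).trans (hM _))) (φ.norm_coe_le_norm _)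
          (norm_nonneg _) (Real.exp_pos _).le
      · exact (Complex.continuous_ofReal.comp
          (Real.continuous_exp.comp (hc.comp (continuous_cons_right a)))).mul
          (φ.continuous.comp (continuous_cons_right a)))
    (Real.exp M * ‖φ‖)
    (by
      intro x
      have := norm_integral_le_of_norm_le_const (μ := p)
        (f := fun a => (Real.exp (f (cons a x)) : ℂ) * φ (cons a x)) (C := Real.exp M * ‖φ‖)
        (Filter.Eventually.of_forall fun a => by
          rw [norm_mul, Complex.norm_real, Real.norm_eq_abs, Real.abs_exp]
          exact mul_le_mul (Real.exp_le_exp.2 ((le_abs_self _).trans (hM _)))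
            (φ.norm_coe_le_norm _) (norm_nonneg _) (Real.exp_pos _).le)
      simpa using this)
  map_add' φ ψ := by
    ext x
    change ∫ a, (Real.exp (f (cons a x)) : ℂ) * (φ (cons a x) + ψ (cons a x)) ∂p =
      ∫ a, (Real.exp (f (cons a x)) : ℂ) * φ (cons a x) ∂p +
      ∫ a, (Real.exp (f (cons a x)) : ℂ) * ψ (cons a x) ∂p
    simp_rw [mul_add]
    exact integral_add (int_gφ p hc hM φ x x) (int_gφ p hc hM ψ x x)
  map_smul' z φ := by
    ext x
    change ∫ a, (Real.exp (f (cons a x)) : ℂ) * (z * φ (cons a x)) ∂p =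
      z * ∫ a, (Real.exp (f (cons a x)) : ℂ) * φ (cons a x) ∂p
    rw [← integral_const_mul]
    congr 1
    ext a
    ring

theorem Lop_apply (p : Measure E) [IsProbabilityMeasure p] {f : (ℕ → E) → ℝ} (hc : Continuous f)
    {M : ℝ} (hM : ∀ x, |f x| ≤ M) (φ : (ℕ → E) →ᵇ ℂ) (x : ℕ → E) :
    Lop p f hc M hM φ x = ∫ a, (Real.exp (f (cons a x)) : ℂ) * φ (cons a x) ∂p := rfl

/-- Integration as a linear functional. -/
def Nop {X : Type*} [TopologicalSpace X] [MeasurableSpace X] [BorelSpace X]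
    (ν : Measure X) [IsProbabilityMeasure ν] : (X →ᵇ ℂ) →ₗ[ℂ] ℂ where
  toFun φ := ∫ x, φ x ∂ν
  map_add' φ ψ := integral_add (φ.integrable ν) (ψ.integrable ν)
  map_smul' z _ := integral_const_mul z _

theorem bcf_int {X : Type*} [TopologicalSpace X] [MeasurableSpace X] [BorelSpace X]
    (ν : Measure X) [IsProbabilityMeasure ν] (φ : X →ᵇ ℂ) :
    ∫ x, φ x ∂ν = ((∫ x, (φ x).re ∂ν : ℝ) : ℂ) + ((∫ x, (φ x).im ∂ν : ℝ) : ℂ) * Complex.I := by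
  have hi : Integrable (fun x => φ x) ν := φ.integrable ν
  have h1 := integral_re hi
  have h2 := integral_im hi
  simp only [RCLike.re_eq_complex_re, RCLike.im_eq_complex_im] at h1 h2
  rw [h1, h2, Complex.re_add_im]

theorem gap [SecondCountableTopology E] (p : Measure E) [IsProbabilityMeasure p]
    {α : ℝ} (hα0 : 0 < α)
    {f : (ℕ → E) → ℝ} (hc : Continuous f) {M : ℝ} (hM : ∀ x, |f x| ≤ M) {D : ℝ} (hD0 : 0 ≤ D)
    (hD : HolderConst α D f)
    (hnorm : ∀ x, ruelle p f (fun _ => 1) x = 1)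
    (ν : Measure (ℕ → E)) [IsProbabilityMeasure ν]
    (hconf : ∀ φ : (ℕ → E) → ℝ, MemCb φ → (∫ x, ruelle p f φ x ∂ν) = ∫ x, φ x ∂ν) :
    ∃ B r : ℝ, 0 < B ∧ GapData (Lop p f hc M hM) (Nop ν)
      (fun x y => 1 - Real.exp (-(B * dX x y ^ α))) r := by
  set θ : ℝ := (1 / 2 : ℝ) ^ α with hθ
  have θ0 : 0 < θ := by positivity
  have θ1 : θ < 1 := Real.rpow_lt_one (by norm_num) (by norm_num) hα0
  have q0 : 0 < 1 - θ := by linarith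
  set B := D * θ / (1 - θ) + 1 with hB
  have B0 : 0 < B := by positivity
  set th := θ * (D + B) / B with hth
  have hthB : th * B = θ * (D + B) := by rw [hth]; field_simp
  have th0 : 0 < th := by positivity
  have th1 : th < 1 := by
    rw [hth, div_lt_one B0]
    have : B * (1 - θ) = D * θ + (1 - θ) := by rw [hB]; field_simp
    linarith
  set r := (1 - Real.exp (-(th * B))) / (1 - Real.exp (-B)) with hr
  have hb : Real.exp (-B) < 1 := by rw [Real.exp_lt_one_iff]; linarith
  have hb' : 0 < 1 - Real.exp (-B) := by linarith
  have htb : Real.exp (-(th * B)) < 1 := by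
    rw [Real.exp_lt_one_iff]; have := mul_pos th0 B0; linarith
  have u0 : ∀ x y : ℕ → E, 0 ≤ dX x y ^ α := fun x y => Real.rpow_nonneg (dX_nonneg x y) _
  have u1 : ∀ x y : ℕ → E, dX x y ^ α ≤ 1 := fun x y =>
    Real.rpow_le_one (dX_nonneg x y) (dX_le_one x y) hα0.le
  have ucons : ∀ a (x y : ℕ → E), dX (cons a x) (cons a y) ^ α = θ * dX x y ^ α := by
    intro a x y
    rw [dX_cons, Real.div_rpow (dX_nonneg x y) (by norm_num), hθ, Real.div_rpow (by norm_num)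
      (by norm_num), Real.one_rpow]
    ring
  have m1 : ∀ x, ∫ a, Real.exp (f (cons a x)) ∂p = 1 := by
    intro x
    have := hnorm x
    simpa [ruelle] using this
  refine ⟨B, r, B0, ?_⟩
  refine
    { db0 := fun x y => ?_, db1 := fun x y => ?_, r0 := ?_, r1 := ?_, L1 := ?_, N1 := ?_, NL := ?_,
      Nb := ?_, con := ?_ }
  · have : Real.exp (-(B * dX x y ^ α)) ≤ 1 := by
      rw [Real.exp_le_one_iff]; have := mul_nonneg B0.le (u0 x y); linarith
    linarith
  · linarith [Real.exp_pos (-(B * dX x y ^ α))]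
  · exact div_pos (by linarith) hb'
  · rw [hr, div_lt_one hb']
    have : Real.exp (-B) < Real.exp (-(th * B)) := by
      apply Real.exp_lt_exp.2; nlinarith
    linarith
  · ext x
    rw [Lop_apply]
    simp only [bcf_one_apply, mul_one]
    rw [integral_complex_ofReal, m1]
    simp
  · change ∫ x, (1 : (ℕ → E) →ᵇ ℂ) x ∂ν = 1
    simp [bcf_one_apply]
  · intro φ
    change ∫ x, Lop p f hc M hM φ x ∂ν = ∫ x, φ x ∂ν
    rw [bcf_int, bcf_int ν φ]
    have hre : ∀ x, (Lop p f hc M hM φ x).re = ruelle p f (fun x => (φ x).re) x := by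
      intro x
      rw [Lop_apply]
      have := integral_re (int_gφ p hc hM φ x x)
      simp only [RCLike.re_eq_complex_re] at this
      rw [← this, ruelle]
      congr 1
      ext a
      rw [Complex.re_ofReal_mul]
    have him : ∀ x, (Lop p f hc M hM φ x).im = ruelle p f (fun x => (φ x).im) x := by
      intro x
      rw [Lop_apply]
      have := integral_im (int_gφ p hc hM φ x x)
      simp only [RCLike.im_eq_complex_im] at this
      rw [← this, ruelle]
      congr 1
      ext a
      rw [Complex.im_ofReal_mul]
    simp_rw [hre, him]
    rw [hconf, hconf]
    · exact ⟨by fun_prop, ‖φ‖, fun x => (Complex.abs_im_le_norm _).trans (φ.norm_coe_le_norm x)⟩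
    · exact ⟨by fun_prop, ‖φ‖, fun x => (Complex.abs_re_le_norm _).trans (φ.norm_coe_le_norm x)⟩
  · intro φ
    change ‖∫ x, φ x ∂ν‖ ≤ ‖φ‖
    have := norm_integral_le_of_norm_le_const (μ := ν) (f := fun x => φ x) (C := ‖φ‖)
      (Filter.Eventually.of_forall fun x => φ.norm_coe_le_norm x)
    simpa using this
  · intro c φ hc0 hφ x y
    rw [Lop_apply, Lop_apply]
    set u := dX x y ^ α with hu
    have := coupling p (κ := Real.exp (-(D * (θ * u)))) (c := c)
      (δ := c * (1 - Real.exp (-(B * (θ * u)))))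
      (int_g p hc hM x) (int_g p hc hM y) (int_gφ p hc hM φ x x) (int_gφ p hc hM φ x y)
      (int_gφ p hc hM φ y y) (m1 x) (m1 y) (fun a => (Real.exp_pos _).le) (Real.exp_pos _).le
      (fun a => by
        rw [← Real.exp_add]
        apply Real.exp_le_exp.2
        have := hD (cons a x) (cons a y)
        rw [ucons] at this
        have := (abs_le.1 this).2
        linarith)
      (fun a => by
        have := hφ (cons a x) (cons a y)
        simp only at this
        rwa [ucons] at this)
      (fun a b => by
        refine (hφ _ _).trans ?_
        refine mul_le_of_le_one_right hc0 ?_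
        linarith [Real.exp_pos (-(B * dX (cons a x) (cons b y) ^ α))])
    refine this.trans ?_
    have e : Real.exp (-(D * (θ * u))) * (c * (1 - Real.exp (-(B * (θ * u))))) +
        (1 - Real.exp (-(D * (θ * u)))) * c = c * (1 - Real.exp (-(th * B * u))) := by
      have : Real.exp (-(th * B * u)) = Real.exp (-(D * (θ * u))) * Real.exp (-(B * (θ * u))) := by
        rw [← Real.exp_add, hthB]; congr 1; ring
      rw [this]; ring
    rw [e]
    have := mul_le_mul_of_nonneg_left (concave_ineq B0 th0 th1 (u0 x y) (u1 x y)) hc0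
    rw [← hr, ← hu] at this
    linarith

end Concrete

/-- Central limit theorem with rate (Berry–Esseen type) for Birkhoff
sums of a Hölder observable `ξ` with `∫ ξ dν = 0`, under a normalized Hölder
potential: the asymptotic variance `s²` exists, and if `s > 0` then
`sup_u |ν(S_n(ξ) ≤ u √n) − Φ(u/s)| ≤ C n^{−1/2}`. -/
theorem statement11 {E : Type*} [MetricSpace E] [CompleteSpace E]
    [TopologicalSpace.SeparableSpace E] [MeasurableSpace E] [BorelSpace E] [Nonempty E]
    (p : Measure E) [IsProbabilityMeasure p]
    (α : ℝ) (hα0 : 0 < α) (hα1 : α < 1)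
    (f : (ℕ → E) → ℝ) (hf : MemHol α f)
    (hnormalized : ∀ x, ruelle p f (fun _ => 1) x = 1)
    (ν : Measure (ℕ → E)) (hν : IsProbabilityMeasure ν)
    (hconf : ∀ φ : (ℕ → E) → ℝ, MemCb φ → (∫ x, ruelle p f φ x ∂ν) = ∫ x, φ x ∂ν)
    (ξ : (ℕ → E) → ℝ) (hξ : MemHol α ξ) (hmean : (∫ x, ξ x ∂ν) = 0) :
    ∃ s2 : ℝ, 0 ≤ s2 ∧
      Tendsto (fun n : ℕ => (1 / (n : ℝ)) * ∫ x, (birkhoff ξ n x) ^ 2 ∂ν)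
        atTop (nhds s2) ∧
      (0 < s2 → ∃ C : ℝ, 0 < C ∧ ∀ n : ℕ, 1 ≤ n → ∀ u : ℝ,
        |(ν {x : ℕ → E | birkhoff ξ n x ≤ u * Real.sqrt n}).toReal -
            stdNormalCDF (u / Real.sqrt s2)| ≤ C / Real.sqrt n) := by
  haveI : SecondCountableTopology E := UniformSpace.secondCountable_of_separable E
  haveI := hν
  obtain ⟨hc, ⟨M, hM⟩, D, hD⟩ := hf
  obtain ⟨hξc, ⟨Mξ, hMξ⟩, Dξ, hDξ⟩ := hξ
  have u0 : ∀ x y : ℕ → E, 0 ≤ dX x y ^ α := fun x y => Real.rpow_nonneg (dX_nonneg x y) _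
  have u1 : ∀ x y : ℕ → E, dX x y ^ α ≤ 1 := fun x y =>
    Real.rpow_le_one (dX_nonneg x y) (dX_le_one x y) hα0.le
  have hD' : HolderConst α (max D 0) f := fun x y =>
    (hD x y).trans (mul_le_mul_of_nonneg_right (le_max_left _ _) (u0 x y))
  obtain ⟨B, r, hB, H⟩ := gap p hα0 hc hM (le_max_right D 0) hD' hnormalized ν hconf
  have hw : 0 < 1 - Real.exp (-B) := by
    have : Real.exp (-B) < 1 := by rw [← Real.exp_zero]; exact Real.exp_lt_exp.2 (by linarith)
    linarith
  let K : ℝ := max 1 (max Mξ (max Dξ 0 / (1 - Real.exp (-B))))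
  have hK1 : 1 ≤ K := le_max_left _ _
  have hK2 : Mξ ≤ K := (le_max_left _ _).trans (le_max_right _ _)
  have hK3 : max Dξ 0 ≤ K * (1 - Real.exp (-B)) := by
    rw [← div_le_iff₀ hw]
    exact (le_max_right _ _).trans (le_max_right _ _)
  refine main_abstract H (σ := ⟨shift, continuous_shift⟩) ?_ ν (fun φ => rfl) hξc (K := K) hK1
    (fun x => (hMξ x).trans hK2) ?_ hmean (S := birkhoff ξ) ?_ ?_
  · intro φ ψ
    ext x
    rw [BoundedContinuousFunction.mul_apply, Lop_apply, Lop_apply, ← integral_const_mul]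
    congr 1
    ext a
    change _ * (φ (cons a x) * ψ x) = _
    ring
  · intro x y
    calc |ξ x - ξ y| ≤ Dξ * dX x y ^ α := hDξ x y
      _ ≤ max Dξ 0 * dX x y ^ α := mul_le_mul_of_nonneg_right (le_max_left _ _) (u0 x y)
      _ ≤ K * (1 - Real.exp (-B)) * dX x y ^ α := mul_le_mul_of_nonneg_right hK3 (u0 x y)
      _ = K * ((1 - Real.exp (-B)) * dX x y ^ α) := by ring
      _ ≤ K * (1 - Real.exp (-(B * dX x y ^ α))) :=
        mul_le_mul_of_nonneg_left (convex_ineq (u0 x y) (u1 x y)) (by linarith)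
  · intro x
    simp [birkhoff]
  · intro n x
    simp only [birkhoff, Finset.sum_range_succ', Function.iterate_succ_apply]
    rw [add_comm]
    rfl

end
end

section
/- Let S be an arbitrary topological space and let M^a_1(S) denote the set of functionals μ in the topological dual of C_b(S,ℝ) with operator norm one and μ(f) ≥ 0 for every f ≥ 0. For μ ∈ M^a_1(S), the following are equivalent: (i) μ is an extreme point of M^a_1(S); (ii) μ is an exposed point of M^a_1(S), i.e. there exists a functional ξ in the bidual C_b(S,ℝ)** which attains its strict minimum on M^a_1(S) at μ; (iii) there exists a functional ξ ∈ C_b(S,ℝ)** with ξ(μ) = 0 and ξ(ν) > 0 for every ν ∈ M^a_1(S) \ {μ}. -/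
open BoundedContinuousFunction

/-- `M^a_1(S)`: the norm-one positive functionals on `C_b(S,ℝ)`. -/
def Ma1S (S : Type*) [TopologicalSpace S] : Set ((S →ᵇ ℝ) →L[ℝ] ℝ) :=
  {μ | ‖μ‖ = 1 ∧ ∀ f : S →ᵇ ℝ, 0 ≤ f → 0 ≤ μ f}

namespace Ma1Aux

variable {S : Type*} [TopologicalSpace S]

lemma le_norm_one (f : S →ᵇ ℝ) : f ≤ ‖f‖ • (1 : S →ᵇ ℝ) := fun x => by
  simpa using (le_abs_self _).trans (f.norm_coe_le_norm x)

lemma neg_le_norm_one (f : S →ᵇ ℝ) : -f ≤ ‖f‖ • (1 : S →ᵇ ℝ) := fun x => by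
  simpa using (neg_le_abs _).trans (f.norm_coe_le_norm x)

lemma mono {ν : (S →ᵇ ℝ) →L[ℝ] ℝ} (h : ∀ f : S →ᵇ ℝ, 0 ≤ f → 0 ≤ ν f) {f g : S →ᵇ ℝ}
    (hfg : f ≤ g) : ν f ≤ ν g := by
  have := h (g - f) (sub_nonneg.2 hfg)
  rw [map_sub] at this
  linarith

lemma abs_le {ν : (S →ᵇ ℝ) →L[ℝ] ℝ} (h : ∀ f : S →ᵇ ℝ, 0 ≤ f → 0 ≤ ν f) (f : S →ᵇ ℝ) :
    |ν f| ≤ ν 1 * ‖f‖ := by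
  have h1 := mono h (le_norm_one f)
  have h2 := mono h (neg_le_norm_one f)
  rw [map_smul, smul_eq_mul] at h1 h2
  rw [map_neg] at h2
  rw [_root_.abs_le]
  constructor <;> linarith

lemma norm_one_le : ‖(1 : S →ᵇ ℝ)‖ ≤ 1 :=
  (BoundedContinuousFunction.norm_le zero_le_one).2 fun x => by simp

lemma mem_iff {ν : (S →ᵇ ℝ) →L[ℝ] ℝ} :
    ν ∈ Ma1S S ↔ ν 1 = 1 ∧ ∀ f : S →ᵇ ℝ, 0 ≤ f → 0 ≤ ν f := by
  have key : (∀ f : S →ᵇ ℝ, 0 ≤ f → 0 ≤ ν f) → ‖ν‖ = ν 1 := by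
    intro h
    have h0 : 0 ≤ ν 1 := h 1 fun x => by simp
    apply le_antisymm
    · exact ν.opNorm_le_bound h0 (abs_le h)
    · have := ν.le_opNorm 1
      have h2 := norm_one_le (S := S)
      have h3 := le_abs_self (ν 1)
      rw [Real.norm_eq_abs] at this
      nlinarith [norm_nonneg ν]
  constructor
  · rintro ⟨h1, h2⟩
    exact ⟨by rw [← key h2, h1], h2⟩
  · rintro ⟨h1, h2⟩
    exact ⟨by rw [key h2, h1], h2⟩

/-- `f ↦ ν (g * f)`. -/
noncomputable def mulFun (ν : (S →ᵇ ℝ) →L[ℝ] ℝ) (g : S →ᵇ ℝ) : (S →ᵇ ℝ) →L[ℝ] ℝ :=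
  ν.comp (ContinuousLinearMap.mul ℝ (S →ᵇ ℝ) g)

lemma mulFun_apply (ν : (S →ᵇ ℝ) →L[ℝ] ℝ) (g f : S →ᵇ ℝ) : mulFun ν g f = ν (g * f) := rfl

lemma mul_zero_of {ν : (S →ᵇ ℝ) →L[ℝ] ℝ} (h : ∀ f : S →ᵇ ℝ, 0 ≤ f → 0 ≤ ν f)
    {g : S →ᵇ ℝ} (hg : 0 ≤ g) (hz : ν g = 0) (f : S →ᵇ ℝ) : ν (g * f) = 0 := by
  have hp : ∀ f : S →ᵇ ℝ, 0 ≤ f → 0 ≤ mulFun ν g f := fun f hf =>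
    h _ fun x => mul_nonneg (hg x) (hf x)
  have := abs_le hp f
  rw [mulFun_apply, mulFun_apply, mul_one, hz, zero_mul] at this
  exact abs_nonpos_iff.1 this

lemma mul_unit {μ : (S →ᵇ ℝ) →L[ℝ] ℝ} (hμ : μ ∈ Set.extremePoints ℝ (Ma1S S))
    {g : S →ᵇ ℝ} (h0 : 0 ≤ g) (h1 : g ≤ 1) (f : S →ᵇ ℝ) : μ (g * f) = μ g * μ f := by
  obtain ⟨hm1, hpos⟩ := mem_iff.1 hμ.1
  have e : ∀ f, μ ((1 - g) * f) = μ f - μ (g * f) := fun f => by rw [sub_mul, one_mul, map_sub]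
  have eg : μ (1 - g) = 1 - μ g := by rw [map_sub, hm1]
  have hg' : 0 ≤ 1 - g := sub_nonneg.2 h1
  have t0 := hpos g h0
  have t1 := hpos _ hg'
  rcases t0.eq_or_lt with ht | ht
  · rw [mul_zero_of hpos h0 ht.symm, ← ht, zero_mul]
  rcases t1.eq_or_lt with ht' | ht'
  · have := mul_zero_of hpos hg' ht'.symm f
    have h2 : μ g = 1 := by linarith
    rw [h2]; linarith [e f]
  have mk : ∀ k : S →ᵇ ℝ, 0 ≤ k → 0 < μ k → (μ k)⁻¹ • mulFun μ k ∈ Ma1S S := by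
    intro k hk hk'
    refine mem_iff.2 ⟨?_, fun f hf => ?_⟩
    · simp [mulFun_apply, hk'.ne']
    · exact mul_nonneg (inv_nonneg.2 hk'.le) (hpos _ fun x => mul_nonneg (hk x) (hf x))
  have := hμ.2 (mk g h0 ht) (mk _ hg' ht') ⟨μ g, μ (1 - g), ht, ht', by linarith, by
    rw [smul_smul, smul_smul, mul_inv_cancel₀ ht.ne', mul_inv_cancel₀ ht'.ne', one_smul, one_smul]
    ext f
    show μ (g * f) + μ ((1 - g) * f) = μ f
    rw [e]; ring⟩
  have h2 := congrArg (fun ν => ν f) this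
  change (μ g)⁻¹ * μ (g * f) = μ f at h2
  rw [← h2]; field_simp

lemma mul_map {μ : (S →ᵇ ℝ) →L[ℝ] ℝ} (hμ : μ ∈ Set.extremePoints ℝ (Ma1S S))
    (g f : S →ᵇ ℝ) : μ (g * f) = μ g * μ f := by
  obtain ⟨hm1, hpos⟩ := mem_iff.1 hμ.1
  set M := ‖g‖ + 1 with hM
  have hM0 : 0 < M := by positivity
  have hk := mul_unit hμ (g := (2 * M)⁻¹ • (g + M • (1 : S →ᵇ ℝ)))
    (fun x => by
      have := neg_abs_le (g x)
      have h2 := g.norm_coe_le_norm x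
      rw [Real.norm_eq_abs] at h2
      have : 0 ≤ g x + M := by linarith
      have h3 := mul_nonneg (by positivity : 0 ≤ (2 * M)⁻¹) this
      have h4 : ((2 * M)⁻¹ • (g + M • (1 : S →ᵇ ℝ))) x = (2 * M)⁻¹ * (g x + M) := by
        simp [mul_add]
      exact h3.trans_eq h4.symm)
    (fun x => by
      have := le_abs_self (g x)
      have h2 := g.norm_coe_le_norm x
      rw [Real.norm_eq_abs] at h2
      have : g x + M ≤ 2 * M := by linarith
      have : (2 * M)⁻¹ * (g x + M) ≤ 1 := by
        rw [inv_mul_le_iff₀ (by positivity)]; linarith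
      have h4 : ((2 * M)⁻¹ • (g + M • (1 : S →ᵇ ℝ))) x = (2 * M)⁻¹ * (g x + M) := by
        simp [mul_add]
      exact h4.trans_le this) f
  rw [smul_mul_assoc, add_mul, smul_mul_assoc, one_mul] at hk
  simp only [map_smul, map_add, smul_eq_mul, hm1] at hk
  field_simp at hk
  linarith

/-- The set of `f` with `0 ≤ f ≤ 1`, `μ f = 1`. -/
def D (μ : (S →ᵇ ℝ) →L[ℝ] ℝ) : Set (S →ᵇ ℝ) := {f | 0 ≤ f ∧ f ≤ 1 ∧ μ f = 1}

lemma exists_xi {μ : (S →ᵇ ℝ) →L[ℝ] ℝ} (hμ : μ ∈ Set.extremePoints ℝ (Ma1S S)) :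
    ∃ ξ : ((S →ᵇ ℝ) →L[ℝ] ℝ) →L[ℝ] ℝ, ξ μ = 1 ∧
      ∀ ν ∈ Ma1S S, ∀ f ∈ D μ, ξ ν ≤ ν f := by
  obtain ⟨hm1, hpos⟩ := mem_iff.1 hμ.1
  have : Nonempty (D μ) := ⟨⟨1, fun x => by simp, le_rfl, hm1⟩⟩
  have : IsCodirectedOrder (D μ) := ⟨fun a b =>
    ⟨⟨a.1 * b.1, fun x => mul_nonneg (a.2.1 x) (b.2.1 x),
      fun x => mul_le_one₀ (a.2.2.1 x) (b.2.1 x) (b.2.2.1 x), by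
        rw [mul_map hμ, a.2.2.2, b.2.2.2, one_mul]⟩,
      fun x => mul_le_of_le_one_right (a.2.1 x) (b.2.2.1 x),
      fun x => mul_le_of_le_one_left (b.2.1 x) (a.2.2.1 x)⟩⟩
  let U : Ultrafilter (D μ) := Ultrafilter.of Filter.atBot
  have hU : (U : Filter (D μ)) ≤ Filter.atBot := Ultrafilter.of_le _
  have bd : ∀ (ν : (S →ᵇ ℝ) →L[ℝ] ℝ) (f : D μ), |ν f.1| ≤ ‖ν‖ := by
    intro ν f
    have hf : ‖f.1‖ ≤ 1 := (BoundedContinuousFunction.norm_le zero_le_one).2 fun x => by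
      have h0 : 0 ≤ f.1 x := f.2.1 x
      rw [Real.norm_eq_abs, abs_of_nonneg h0]
      exact f.2.2.1 x
    have := ν.le_opNorm f.1
    rw [Real.norm_eq_abs] at this
    nlinarith [norm_nonneg ν]
  have ex : ∀ ν : (S →ᵇ ℝ) →L[ℝ] ℝ, ∃ a : ℝ, |a| ≤ ‖ν‖ ∧
      Filter.Tendsto (fun f : D μ => ν f.1) U (nhds a) := by
    intro ν
    obtain ⟨a, ha, hl⟩ := (isCompact_Icc (a := -‖ν‖) (b := ‖ν‖)).ultrafilter_le_nhds
      (U.map (fun f : D μ => ν f.1)) (by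
        rw [Filter.le_principal_iff]
        exact Filter.mem_map.2 (Filter.univ_mem' fun f => _root_.abs_le.1 (bd ν f)))
    exact ⟨a, _root_.abs_le.2 ha, hl⟩
  choose L hLb hL using ex
  let ξ : ((S →ᵇ ℝ) →L[ℝ] ℝ) →ₗ[ℝ] ℝ :=
    { toFun := L
      map_add' := fun a b => tendsto_nhds_unique (hL (a + b)) ((hL a).add (hL b))
      map_smul' := fun c a => tendsto_nhds_unique (hL (c • a)) ((hL a).const_mul c) }
  have hb : ∀ ν, ‖ξ ν‖ ≤ 1 * ‖ν‖ := fun ν => by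
    rw [one_mul]; exact hLb ν
  refine ⟨⟨ξ, AddMonoidHomClass.continuous_of_bound ξ 1 hb⟩, ?_, ?_⟩
  · refine tendsto_nhds_unique (hL μ) ?_
    have : (fun f : D μ => μ f.1) = fun _ => 1 := funext fun f => f.2.2.2
    rw [this]
    exact tendsto_const_nhds
  · intro ν hν f hf
    refine le_of_tendsto (hL ν) (hU ?_)
    filter_upwards [Filter.eventually_le_atBot (⟨f, hf⟩ : D μ)] with g hg
    exact mono (mem_iff.1 hν).2 hg

lemma eq_of {μ ν : (S →ᵇ ℝ) →L[ℝ] ℝ} (hμ : μ ∈ Set.extremePoints ℝ (Ma1S S))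
    (hν : ν ∈ Ma1S S) (h : ∀ f ∈ D μ, 1 ≤ ν f) : ν = μ := by
  obtain ⟨hm1, hpos⟩ := mem_iff.1 hμ.1
  obtain ⟨hn1, hnpos⟩ := mem_iff.1 hν
  ext f
  set k : S →ᵇ ℝ := f - μ f • (1 : S →ᵇ ℝ) with hk
  have hk0 : μ k = 0 := by simp [hk, hm1]
  set M := ‖k * k‖ + 1 with hM
  have hM0 : 0 < M := by positivity
  have hkk : ∀ x, 0 ≤ (k * k) x := fun x => mul_self_nonneg (k x)
  have h1 := h (1 - M⁻¹ • (k * k)) ⟨sub_nonneg.2 fun x => by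
      have h2 := (le_abs_self _).trans ((k * k).norm_coe_le_norm x)
      have : M⁻¹ * (k * k) x ≤ 1 := by
        rw [inv_mul_le_iff₀ hM0]; linarith
      exact this, sub_le_self _ fun x => mul_nonneg (inv_nonneg.2 hM0.le) (hkk x), by
      rw [map_sub, map_smul, mul_map hμ, hk0, hm1]; simp⟩
  have hz : ν (k * k) ≤ 0 := by
    rw [map_sub, map_smul, hn1, smul_eq_mul] at h1
    have : M⁻¹ * ν (k * k) ≤ 0 := by linarith
    by_contra hc
    have := mul_pos (inv_pos.2 hM0) (not_le.1 hc)
    linarith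
  have key : ∀ c : ℝ, 0 ≤ 1 + 2 * c * ν k := by
    intro c
    have h3 := hnpos ((1 + c • k) * (1 + c • k)) fun x => mul_self_nonneg ((1 + c • k) x)
    have e : (1 + c • k) * (1 + c • k) = 1 + (2 * c) • k + (c * c) • (k * k) := by
      ext x; simp; ring
    rw [e, map_add, map_add, map_smul, map_smul, hn1, smul_eq_mul, smul_eq_mul] at h3
    nlinarith [mul_self_nonneg c]
  have hv : ν k = 0 := by
    by_contra hc
    have := key (-(ν k)⁻¹)
    have e : 2 * -(ν k)⁻¹ * ν k = -2 := by field_simp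
    linarith
  have : ν k = ν f - μ f := by simp [hk, hn1]
  linarith

end Ma1Aux

/-- For `μ ∈ M^a_1(S)`, `S` an arbitrary topological space, the
following are equivalent: (i) `μ` is an extreme point of `M^a_1(S)`;
(ii) `μ` is an exposed point of `M^a_1(S)`, i.e. some `ξ` in the bidual attains its
strict minimum on `M^a_1(S)` at `μ`; (iii) some `ξ` in the bidual vanishes at `μ`
and is strictly positive on `M^a_1(S) \ {μ}`. -/
theorem statement13 {S : Type*} [TopologicalSpace S]
    (μ : (S →ᵇ ℝ) →L[ℝ] ℝ) (hμ : μ ∈ Ma1S S) :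
    (μ ∈ Set.extremePoints ℝ (Ma1S S) ↔
      ∃ ξ : ((S →ᵇ ℝ) →L[ℝ] ℝ) →L[ℝ] ℝ, ∀ ν ∈ Ma1S S, ν ≠ μ → ξ μ < ξ ν) ∧
    (μ ∈ Set.extremePoints ℝ (Ma1S S) ↔
      ∃ ξ : ((S →ᵇ ℝ) →L[ℝ] ℝ) →L[ℝ] ℝ, ξ μ = 0 ∧ ∀ ν ∈ Ma1S S, ν ≠ μ → 0 < ξ ν) := by
  have h13 : μ ∈ Set.extremePoints ℝ (Ma1S S) →
      ∃ ξ : ((S →ᵇ ℝ) →L[ℝ] ℝ) →L[ℝ] ℝ, ξ μ = 0 ∧ ∀ ν ∈ Ma1S S, ν ≠ μ → 0 < ξ ν := by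
    intro h
    obtain ⟨ξ, h1, h2⟩ := Ma1Aux.exists_xi h
    have ev : ∀ ν ∈ Ma1S S,
        (ContinuousLinearMap.apply ℝ ℝ (1 : S →ᵇ ℝ) - ξ) ν = 1 - ξ ν := by
      intro ν hν
      rw [_root_.sub_apply, ContinuousLinearMap.apply_apply,
        (Ma1Aux.mem_iff.1 hν).1]
    refine ⟨ContinuousLinearMap.apply ℝ ℝ (1 : S →ᵇ ℝ) - ξ, by rw [ev μ hμ, h1, sub_self], ?_⟩
    intro ν hν hne
    rw [ev ν hν]
    by_contra hc
    exact hne (Ma1Aux.eq_of h hν fun f hf => by linarith [h2 ν hν f hf])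
  have h32 : (∃ ξ : ((S →ᵇ ℝ) →L[ℝ] ℝ) →L[ℝ] ℝ, ξ μ = 0 ∧ ∀ ν ∈ Ma1S S, ν ≠ μ → 0 < ξ ν) →
      ∃ ξ : ((S →ᵇ ℝ) →L[ℝ] ℝ) →L[ℝ] ℝ, ∀ ν ∈ Ma1S S, ν ≠ μ → ξ μ < ξ ν := by
    rintro ⟨ξ, h0, h⟩
    exact ⟨ξ, by rwa [h0]⟩
  have h21 : (∃ ξ : ((S →ᵇ ℝ) →L[ℝ] ℝ) →L[ℝ] ℝ, ∀ ν ∈ Ma1S S, ν ≠ μ → ξ μ < ξ ν) →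
      μ ∈ Set.extremePoints ℝ (Ma1S S) := by
    rintro ⟨ξ, h⟩
    refine ⟨hμ, ?_⟩
    rintro x hx y hy ⟨a, b, ha, hb, hab, e⟩
    by_contra hne
    have h1 := h x hx hne
    have h2 : ξ μ ≤ ξ y := by
      by_cases hy' : y = μ
      · rw [hy']
      · exact (h y hy hy').le
    have h3 : a * ξ x + b * ξ y = ξ μ := by
      rw [← e, map_add, map_smul, map_smul, smul_eq_mul, smul_eq_mul]
    have h4 : a * ξ μ + b * ξ μ = ξ μ := by rw [← add_mul, hab, one_mul]
    nlinarith [mul_lt_mul_of_pos_left h1 ha, mul_le_mul_of_nonneg_left h2 hb.le]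
  exact ⟨⟨fun h => h32 (h13 h), h21⟩, ⟨h13, fun h => h21 (h32 h)⟩⟩
end
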